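/- There exist μ̂ > 0, c > 0 and γ ≥ 2^{1−n} such that for every 0 < μ ≤ μ̂ the central solution (X^μ, y^μ, S^μ) at ε = 0 satisfies: λ_{[n−i+1]}(S^μ) ≤ n μ / σ and λ_{[i]}(X^μ) ≥ σ / n for i = 1,…,n_B; λ_{[n−i+1]}(X^μ) ≤ n μ / σ and λ_{[i]}(S^μ) ≥ σ / n for i = 1,…,n_N; and μ / (c √n (n μ)^γ) ≤ λ_{[i]}(X^μ) and λ_{[n−i+1]}(S^μ) ≤ c √n (n μ)^γ for i = n_B+1,…,n_B+n_T. -/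

import Mathlib

open Matrix Set

noncomputable section

variable {n m : ℕ}

/-- Feasibility for the primal SDO problem `(P_ε)` (the feasible set does not depend on `ε`). -/
def PrimalFeasible (A : Fin m → Matrix (Fin n) (Fin n) ℝ) (b : Fin m → ℝ)
    (X : Matrix (Fin n) (Fin n) ℝ) : Prop :=
  X.IsSymm ∧ (∀ i, ((A i) * X).trace = b i) ∧ X.PosSemidef

/-- Feasibility for the dual SDO problem `(D_ε)`. -/
def DualFeasible (C Cbar : Matrix (Fin n) (Fin n) ℝ)
    (A : Fin m → Matrix (Fin n) (Fin n) ℝ) (ε : ℝ)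
    (y : Fin m → ℝ) (S : Matrix (Fin n) (Fin n) ℝ) : Prop :=
  S.IsSymm ∧ (∑ i, y i • A i) + S = C + ε • Cbar ∧ S.PosSemidef

/-- The optimal value function `v(ε)` of `(P_ε)`, with values in `EReal`. -/
def vfun (C Cbar : Matrix (Fin n) (Fin n) ℝ) (A : Fin m → Matrix (Fin n) (Fin n) ℝ)
    (b : Fin m → ℝ) (ε : ℝ) : EReal :=
  sInf ((fun X => (((C + ε • Cbar) * X).trace : EReal)) '' {X | PrimalFeasible A b X})

/-- `E = {ε : v(ε) > -∞}`. -/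
def Eset (C Cbar : Matrix (Fin n) (Fin n) ℝ) (A : Fin m → Matrix (Fin n) (Fin n) ℝ)
    (b : Fin m → ℝ) : Set ℝ :=
  {ε | ⊥ < vfun C Cbar A b ε}

/-- The primal optimal set `P*(ε)`. -/
def PrimalOpt (C Cbar : Matrix (Fin n) (Fin n) ℝ) (A : Fin m → Matrix (Fin n) (Fin n) ℝ)
    (b : Fin m → ℝ) (ε : ℝ) : Set (Matrix (Fin n) (Fin n) ℝ) :=
  {X | PrimalFeasible A b X ∧ ∀ X', PrimalFeasible A b X' →
    ((C + ε • Cbar) * X).trace ≤ ((C + ε • Cbar) * X').trace}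

/-- The dual optimal set `D*(ε)`. -/
def DualOpt (C Cbar : Matrix (Fin n) (Fin n) ℝ) (A : Fin m → Matrix (Fin n) (Fin n) ℝ)
    (b : Fin m → ℝ) (ε : ℝ) : Set ((Fin m → ℝ) × Matrix (Fin n) (Fin n) ℝ) :=
  {p | DualFeasible C Cbar A ε p.1 p.2 ∧ ∀ y' S', DualFeasible C Cbar A ε y' S' →
    ∑ i, b i * y' i ≤ ∑ i, b i * p.1 i}

/-- A maximally complementary optimal solution: `X` lies in the relative interior of `P*(ε)`
and `(y, S)` in the relative interior of `D*(ε)`. -/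
def MaxComp (C Cbar : Matrix (Fin n) (Fin n) ℝ) (A : Fin m → Matrix (Fin n) (Fin n) ℝ)
    (b : Fin m → ℝ) (ε : ℝ) (X : Matrix (Fin n) (Fin n) ℝ) (y : Fin m → ℝ)
    (S : Matrix (Fin n) (Fin n) ℝ) : Prop :=
  X ∈ intrinsicInterior ℝ (PrimalOpt C Cbar A b ε) ∧
    (y, S) ∈ intrinsicInterior ℝ (DualOpt C Cbar A b ε)

/-- `π(ε) = π(ε')`: the optimal partitions at `ε` and `ε'` coincide, expressed through
maximally complementary solutions (`B = range X*`, `N = range S*`, `T` being determined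
by `B` and `N`). -/
def SamePartition (C Cbar : Matrix (Fin n) (Fin n) ℝ) (A : Fin m → Matrix (Fin n) (Fin n) ℝ)
    (b : Fin m → ℝ) (ε ε' : ℝ) : Prop :=
  ∃ X y S X' y' S', MaxComp C Cbar A b ε X y S ∧ MaxComp C Cbar A b ε' X' y' S' ∧
    LinearMap.range X.mulVecLin = LinearMap.range X'.mulVecLin ∧
    LinearMap.range S.mulVecLin = LinearMap.range S'.mulVecLin

/-- The standing assumptions: symmetric data, linearly independent constraint matrices and
the interior point condition at `ε = 0`. -/
def StandingAssumptions (C Cbar : Matrix (Fin n) (Fin n) ℝ)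
    (A : Fin m → Matrix (Fin n) (Fin n) ℝ) (b : Fin m → ℝ) : Prop :=
  C.IsSymm ∧ Cbar.IsSymm ∧ (∀ i, (A i).IsSymm) ∧ LinearIndependent ℝ A ∧
    ∃ X y S, PrimalFeasible A b X ∧ X.PosDef ∧ DualFeasible C Cbar A 0 y S ∧ S.PosDef

/-- The invariancy set of `ε̄`. -/
def InvSet (C Cbar : Matrix (Fin n) (Fin n) ℝ) (A : Fin m → Matrix (Fin n) (Fin n) ℝ)
    (b : Fin m → ℝ) (εbar : ℝ) : Set ℝ :=
  {ε | ε ∈ interior (Eset C Cbar A b) ∧ SamePartition C Cbar A b ε εbar}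

/-- `dim B(ε) = dim B(ε')` and `dim N(ε) = dim N(ε')`, expressed through maximally
complementary solutions. -/
def DimsMatch (C Cbar : Matrix (Fin n) (Fin n) ℝ) (A : Fin m → Matrix (Fin n) (Fin n) ℝ)
    (b : Fin m → ℝ) (ε ε' : ℝ) : Prop :=
  ∀ X y S X' y' S', MaxComp C Cbar A b ε X y S → MaxComp C Cbar A b ε' X' y' S' →
    Module.finrank ℝ (LinearMap.range X.mulVecLin) =
        Module.finrank ℝ (LinearMap.range X'.mulVecLin) ∧
      Module.finrank ℝ (LinearMap.range S.mulVecLin) =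
        Module.finrank ℝ (LinearMap.range S'.mulVecLin)

/-- A transition point: a singleton invariancy set such that every neighborhood contains a
parameter at which `dim B` or `dim N` differs. -/
def IsTransitionPoint (C Cbar : Matrix (Fin n) (Fin n) ℝ) (A : Fin m → Matrix (Fin n) (Fin n) ℝ)
    (b : Fin m → ℝ) (εbar : ℝ) : Prop :=
  εbar ∈ interior (Eset C Cbar A b) ∧
    (∀ ε ∈ interior (Eset C Cbar A b), ε ≠ εbar → ¬ SamePartition C Cbar A b ε εbar) ∧
    ∀ ξ : ℝ, 0 < ξ → ∃ ε ∈ Set.Ioo (εbar - ξ) (εbar + ξ) ∩ interior (Eset C Cbar A b),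
      ¬ DimsMatch C Cbar A b ε εbar

/-- Existence of a strictly complementary optimal solution at `ε`. -/
def HasStrictComp (C Cbar : Matrix (Fin n) (Fin n) ℝ) (A : Fin m → Matrix (Fin n) (Fin n) ℝ)
    (b : Fin m → ℝ) (ε : ℝ) : Prop :=
  ∃ X y S, X ∈ PrimalOpt C Cbar A b ε ∧ (y, S) ∈ DualOpt C Cbar A b ε ∧ (X + S).PosDef

/-- Nonsingularity of the Jacobian `J(X, y, S)` of the optimality system, as a linear map on
`S^n × ℝ^m × S^n`: only the trivial symmetric triple is mapped to zero. -/
def JNonsingular (A : Fin m → Matrix (Fin n) (Fin n) ℝ)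
    (X S : Matrix (Fin n) (Fin n) ℝ) : Prop :=
  ∀ (DX DS : Matrix (Fin n) (Fin n) ℝ) (Dy : Fin m → ℝ), DX.IsSymm → DS.IsSymm →
    (∀ i, ((A i) * DX).trace = 0) → ((∑ i, Dy i • A i) + DS = 0) →
    (DX * S + S * DX + X * DS + DS * X = 0) → DX = 0 ∧ Dy = 0 ∧ DS = 0

/-- Primal nondegeneracy of a primal feasible `X`. -/
def PrimalNondeg (A : Fin m → Matrix (Fin n) (Fin n) ℝ)
    (X : Matrix (Fin n) (Fin n) ℝ) : Prop :=
  ∃ (r : ℕ) (M₁ : Matrix (Fin n) (Fin r) ℝ) (M₂ : Matrix (Fin n) (Fin (n - r)) ℝ),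
    M₁ᵀ * M₁ = 1 ∧ M₂ᵀ * M₂ = 1 ∧ M₁ᵀ * M₂ = 0 ∧
    LinearMap.range M₁.mulVecLin = LinearMap.range X.mulVecLin ∧
    LinearIndependent ℝ (fun i =>
      Matrix.fromBlocks (M₁ᵀ * (A i) * M₁) (M₁ᵀ * (A i) * M₂) (M₂ᵀ * (A i) * M₁) 0)

/-- Dual nondegeneracy of a dual feasible `(y, S)` (the condition involves only `S`). -/
def DualNondeg (A : Fin m → Matrix (Fin n) (Fin n) ℝ)
    (S : Matrix (Fin n) (Fin n) ℝ) : Prop :=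
  ∃ (k : ℕ) (N₁ : Matrix (Fin n) (Fin k) ℝ),
    N₁ᵀ * N₁ = 1 ∧ LinearMap.range N₁.mulVecLin = LinearMap.ker S.mulVecLin ∧
    ∀ W : Matrix (Fin k) (Fin k) ℝ, W.IsSymm →
      W ∈ Submodule.span ℝ (Set.range fun i => N₁ᵀ * (A i) * N₁)

/-- A central solution with parameter `μ` for the problems `(P_ε)` and `(D_ε)`. -/
def CentralSol (C Cbar : Matrix (Fin n) (Fin n) ℝ) (A : Fin m → Matrix (Fin n) (Fin n) ℝ)
    (b : Fin m → ℝ) (ε μ : ℝ) (X : Matrix (Fin n) (Fin n) ℝ) (y : Fin m → ℝ)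
    (S : Matrix (Fin n) (Fin n) ℝ) : Prop :=
  PrimalFeasible A b X ∧ DualFeasible C Cbar A ε y S ∧
    X * S = μ • (1 : Matrix (Fin n) (Fin n) ℝ)

/-- The Frobenius norm of a matrix. -/
def frobNorm {α β : Type*} [Fintype α] [Fintype β] (M : Matrix α β ℝ) : ℝ :=
  Real.sqrt (∑ i, ∑ j, (M i j) ^ 2)

/-- The spectral norm (induced 2-norm) of a square matrix. -/
def specNorm {N : ℕ} (M : Matrix (Fin N) (Fin N) ℝ) : ℝ :=
  ‖LinearMap.toContinuousLinearMap (Matrix.toEuclideanLin M)‖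

/-- The smallest eigenvalue of a symmetric matrix, via the Rayleigh quotient. -/
def lamMin {k : ℕ} (M : Matrix (Fin k) (Fin k) ℝ) : ℝ :=
  sInf {r : ℝ | ∃ x : Fin k → ℝ, (∑ i, (x i) ^ 2) = 1 ∧ r = x ⬝ᵥ M.mulVec x}

/-- `θ^μ`: the operator norm of the inverse of the Jacobian `J(X, y, S)` on
`S^n × ℝ^m × S^n`, characterized as the least constant `t ≥ 0` with
`‖(ΔX, Δy, ΔS)‖ ≤ t * ‖J(X,y,S)(ΔX, Δy, ΔS)‖` for all symmetric `ΔX`, `ΔS`. -/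
def thetaMu (A : Fin m → Matrix (Fin n) (Fin n) ℝ)
    (X S : Matrix (Fin n) (Fin n) ℝ) : ℝ :=
  sInf {t : ℝ | 0 ≤ t ∧ ∀ (DX DS : Matrix (Fin n) (Fin n) ℝ) (Dy : Fin m → ℝ),
    DX.IsSymm → DS.IsSymm →
    Real.sqrt (frobNorm DX ^ 2 + (∑ i, (Dy i) ^ 2) + frobNorm DS ^ 2) ≤
      t * Real.sqrt ((∑ i, (((A i) * DX).trace) ^ 2) +
        frobNorm ((∑ i, Dy i • A i) + DS) ^ 2 +
        frobNorm ((1 / 2 : ℝ) • (DX * S + S * DX + X * DS + DS * X)) ^ 2)}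

/-- A nonlinearity interval: a non-singleton open subinterval of `int(E)`, of maximal length,
on which `dim B(·)` and `dim N(·)` are constant while the optimal partition `π(·)` varies. -/
def IsNonlinearityInterval (C Cbar : Matrix (Fin n) (Fin n) ℝ)
    (A : Fin m → Matrix (Fin n) (Fin n) ℝ) (b : Fin m → ℝ) (I : Set ℝ) : Prop :=
  I ⊆ interior (Eset C Cbar A b) ∧ IsOpen I ∧ I.OrdConnected ∧
    (∃ a ∈ I, ∃ c ∈ I, a ≠ c) ∧
    (∀ ε ∈ I, ∀ ε' ∈ I, DimsMatch C Cbar A b ε ε') ∧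
    ¬ (∀ ε ∈ I, ∀ ε' ∈ I, SamePartition C Cbar A b ε ε') ∧
    ∀ I' : Set ℝ, I ⊆ I' → I' ⊆ interior (Eset C Cbar A b) → IsOpen I' → I'.OrdConnected →
      (∀ ε ∈ I', ∀ ε' ∈ I', DimsMatch C Cbar A b ε ε') → I' = I

end

/-!
A central solution has duality gap `n * μ`, so `⟨S, X'⟩ ≤ n * μ` for every primal optimal `X'`.
If `λ_min (Q_Bᵀ X' Q_B) = s`, then `s * tr (Q_Bᵀ S Q_B) ≤ ⟨S, X'⟩`, so the quadratic form of `S` is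
at most `n * μ / s` on `range Q_B`; Courant–Fischer and `S = μ X⁻¹` turn this into bounds on the
eigenvalues of `S` and of `X`. Exchanging primal and dual gives the second block.

For the third block let `S*` be the maximally complementary dual slack and `L` the span of `S*` and
of the dual directions of constant objective, so that the distance of `S` to `L` is `O(n * μ)`. If
`L` contains a positive definite matrix then, by maximality, `ker S* = 0`. Otherwise some nonzero
`Z ⪰ 0` is orthogonal to `L`, and `‖Z S‖² = O(⟨Z, S⟩)` shows that `S` is close to its compression to
`ker Z` up to the square root of the previous error. Iterating on `ker Z`, the dimension drops and
the exponent halves at each step; at most `n - 1` steps occur before the restriction of `S` to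
`ker S*` is controlled, which gives `2 ^ (1 - n)`.
-/

section PosSemidef

variable {ι κ : Type*} [Fintype ι] [Fintype κ]

theorem dotProduct_self_pos {x : ι → ℝ} (hx : x ≠ 0) : 0 < x ⬝ᵥ x := by
  simpa using dotProduct_self_star_pos_iff.2 hx

theorem dotProduct_transpose_mul_mul_mulVec (M : Matrix ι ι ℝ) (F : Matrix ι κ ℝ) (x : κ → ℝ) :
    x ⬝ᵥ (Fᵀ * M * F) *ᵥ x = (F *ᵥ x) ⬝ᵥ M *ᵥ (F *ᵥ x) := by
  rw [← mulVec_mulVec, ← mulVec_mulVec, mulVec_transpose, dotProduct_comm, ← dotProduct_mulVec,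
    dotProduct_comm]

open scoped MatrixOrder Matrix.Norms.L2Operator in
theorem exists_eq_transpose_mul_self {S : Matrix ι ι ℝ} (hS : S.PosSemidef) :
    ∃ F : Matrix ι ι ℝ, S = Fᵀ * F := by
  classical
  exact CStarAlgebra.nonneg_iff_eq_star_mul_self.1 hS.nonneg

theorem trace_mul_nonneg {X S : Matrix ι ι ℝ} (hX : X.PosSemidef) (hS : S.PosSemidef) :
    0 ≤ (X * S).trace := by
  obtain ⟨F, rfl⟩ := exists_eq_transpose_mul_self hX
  rw [Matrix.mul_assoc, trace_mul_comm]
  exact (hS.mul_mul_conjTranspose_same F).trace_nonneg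

theorem trace_transpose_mul_self (F : Matrix ι κ ℝ) : (Fᵀ * F).trace = ∑ i, ∑ j, F i j ^ 2 := by
  rw [trace_mul_comm]
  simp only [trace, diag_apply, mul_apply, transpose_apply, sq]

theorem dotProduct_mulVec_le_trace_mul {M : Matrix ι ι ℝ} (hM : M.PosSemidef) (x : ι → ℝ) :
    x ⬝ᵥ M *ᵥ x ≤ M.trace * (x ⬝ᵥ x) := by
  obtain ⟨F, rfl⟩ := exists_eq_transpose_mul_self hM
  calc x ⬝ᵥ (Fᵀ * F) *ᵥ x = ∑ i, (∑ j, F i j * x j) ^ 2 := by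
        rw [← mulVec_mulVec, dotProduct_mulVec, ← mulVec_transpose, transpose_transpose]
        simp only [dotProduct, mulVec, sq]
    _ ≤ ∑ i, (∑ j, F i j ^ 2) * ∑ j, x j ^ 2 :=
        Finset.sum_le_sum fun i _ => Finset.sum_mul_sq_le_sq_mul_sq _ _ _
    _ = (Fᵀ * F).trace * (x ⬝ᵥ x) := by
        simp only [trace_transpose_mul_self, Finset.sum_mul, dotProduct, sq]

open scoped MatrixOrder Matrix.Norms.L2Operator in
theorem exists_pos_sub_smul_one_posSemidef {ι : Type*} [Finite ι] [DecidableEq ι]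
    {M : Matrix ι ι ℝ} (hM : M.PosDef) :
    ∃ δ : ℝ, 0 < δ ∧ (M - δ • (1 : Matrix ι ι ℝ)).PosSemidef := by
  cases nonempty_fintype ι
  cases subsingleton_or_nontrivial (Matrix ι ι ℝ)
  · exact ⟨1, one_pos, Subsingleton.elim 0 (M - (1 : ℝ) • 1) ▸ .zero⟩
  · obtain ⟨δ, hδ, hle⟩ := (CFC.exists_pos_algebraMap_le_iff hM.isHermitian).2
      fun _ hx => hM.isStrictlyPositive.spectrum_pos hx
    rw [Algebra.algebraMap_eq_smul_one] at hle
    exact ⟨δ, hδ, hle⟩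

theorem exists_eigendecomposition [DecidableEq ι] {Z : Matrix ι ι ℝ} (hZ : Z.IsHermitian) :
    ∃ (V : Matrix ι ι ℝ) (d : ι → ℝ), Vᵀ * V = 1 ∧ Z = V * diagonal d * Vᵀ :=
  ⟨hZ.eigenvectorUnitary, hZ.eigenvalues, Unitary.coe_star_mul_self hZ.eigenvectorUnitary,
    hZ.spectral_theorem⟩

theorem submatrix_val_mul_transpose [DecidableEq ι] (V : Matrix ι ι ℝ) (s : Finset ι) :
    V.submatrix id ((↑) : s → ι) * (V.submatrix id ((↑) : s → ι))ᵀ =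
      V * diagonal (fun k => if k ∈ s then 1 else 0) * Vᵀ := by
  ext i j
  rw [mul_apply, mul_apply]
  simp only [mul_diagonal, mul_ite, mul_one, mul_zero, ite_mul,
    zero_mul, Finset.sum_ite_mem, Finset.univ_inter, transpose_apply, submatrix_apply, id]
  exact Finset.sum_coe_sort s fun k => V i k * V j k

theorem exists_isometry_onto_ker [DecidableEq ι] {Z : Matrix ι ι ℝ} (hZ : Z.IsHermitian) :
    ∃ (s : Finset ι) (U : Matrix ι s ℝ) (H : Matrix ι ι ℝ),
      Uᵀ * U = 1 ∧ Z * U = 0 ∧ U * Uᵀ + H * Z = 1 := by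
  obtain ⟨V, d, hV, rfl⟩ := exists_eigendecomposition hZ
  let s : Finset ι := {k | d k = 0}
  have hs (k : s) : d k = 0 := (Finset.mem_filter.1 k.2).2
  refine ⟨s, V.submatrix id (↑), V * diagonal (fun k => (d k)⁻¹) * Vᵀ, ?_, ?_, ?_⟩
  · ext k l
    refine (congrFun₂ hV k l).trans ?_
    simp only [one_apply, Subtype.coe_inj]
  · ext i k
    have hZV : V * diagonal d * Vᵀ * V = V * diagonal d := by
      rw [Matrix.mul_assoc, hV, Matrix.mul_one]
    have hik := congrFun₂ hZV i k
    rwa [mul_diagonal, hs, mul_zero] at hik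
  · have hdiag : (fun k => (if k ∈ s then 1 else 0) + (d k)⁻¹ * d k) = (1 : ι → ℝ) := by
      funext k
      by_cases hk : d k = 0 <;> simp [s, hk]
    calc _ = V * (diagonal (fun k => if k ∈ s then 1 else 0) +
          diagonal (fun k => (d k)⁻¹) * (Vᵀ * V) * diagonal d) * Vᵀ := by
            rw [submatrix_val_mul_transpose]
            simp only [Matrix.mul_add, Matrix.add_mul, Matrix.mul_assoc]
      _ = 1 := by
        rw [hV, Matrix.mul_one, diagonal_mul_diagonal, diagonal_add, hdiag]
        simpa using mul_eq_one_comm.1 hV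

theorem card_lt_of_isometry_of_mul_eq_zero [DecidableEq κ] {Z : Matrix ι ι ℝ} {U : Matrix ι κ ℝ}
    (hU : Uᵀ * U = 1) (hZU : Z * U = 0) (hZ : Z ≠ 0) : Fintype.card κ < Fintype.card ι := by
  classical
  have hle : Fintype.card κ ≤ Fintype.card ι := by
    calc Fintype.card κ = (Uᵀ * U).rank := by rw [hU, rank_one]
      _ ≤ U.rank := rank_mul_le_right _ _
      _ ≤ Fintype.card ι := rank_le_card_height U
  refine hle.lt_of_ne fun hcard => hZ ?_
  have hUU : U * Uᵀ = 1 := (mul_eq_one_comm_of_equiv (Fintype.equivOfCardEq hcard)).1 hU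
  rw [← Matrix.mul_one Z, ← hUU, ← Matrix.mul_assoc, hZU, Matrix.zero_mul]

open scoped Matrix.Norms.Frobenius

theorem frobenius_norm_sq_eq_trace (F : Matrix ι κ ℝ) : ‖F‖ ^ 2 = (Fᵀ * F).trace := by
  rw [trace_transpose_mul_self, frobenius_norm_def, ← Real.sqrt_eq_rpow,
    Real.sq_sqrt (by positivity)]
  simp only [Real.norm_eq_abs, Real.rpow_two, sq_abs]

theorem frobenius_norm_mul_sq_le {Z S : Matrix ι ι ℝ} (hZ : Z.PosSemidef) (hS : S.PosSemidef) :
    ‖Z * S‖ ^ 2 ≤ Z.trace * S.trace * (Z * S).trace := by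
  obtain ⟨F, rfl⟩ := exists_eq_transpose_mul_self hZ
  obtain ⟨E, rfl⟩ := exists_eq_transpose_mul_self hS
  have hFE : (Fᵀ * F * (Eᵀ * E)).trace = ‖F * Eᵀ‖ ^ 2 := by
    rw [← frobenius_norm_transpose, frobenius_norm_sq_eq_trace, transpose_mul, transpose_transpose,
      transpose_mul, transpose_transpose, Matrix.mul_assoc, trace_mul_comm]
    simp only [Matrix.mul_assoc]
  have hle : ‖Fᵀ * F * (Eᵀ * E)‖ ≤ ‖F‖ * ‖F * Eᵀ‖ * ‖E‖ := by
    calc ‖Fᵀ * F * (Eᵀ * E)‖ = ‖Fᵀ * (F * Eᵀ) * E‖ := by simp only [Matrix.mul_assoc]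
      _ ≤ ‖Fᵀ‖ * ‖F * Eᵀ‖ * ‖E‖ :=
        (frobenius_norm_mul _ _).trans (by gcongr; exact frobenius_norm_mul _ _)
      _ = ‖F‖ * ‖F * Eᵀ‖ * ‖E‖ := by rw [frobenius_norm_transpose]
  rw [hFE, ← frobenius_norm_sq_eq_trace, ← frobenius_norm_sq_eq_trace]
  calc ‖Fᵀ * F * (Eᵀ * E)‖ ^ 2 ≤ (‖F‖ * ‖F * Eᵀ‖ * ‖E‖) ^ 2 := by gcongr
    _ = ‖F‖ ^ 2 * ‖E‖ ^ 2 * ‖F * Eᵀ‖ ^ 2 := by ring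

end PosSemidef

section CourantFischer

theorem dotProduct_mulVec_eq_sum_eigenvalues {ι : Type*} [Fintype ι] [DecidableEq ι]
    {S Q : Matrix ι ι ℝ} {d : ι → ℝ} (hQ : Qᵀ * Q = 1) (hS : S * Q = Q * diagonal d) (u : ι → ℝ) :
    u ⬝ᵥ S *ᵥ u = ∑ k, d k * (Qᵀ *ᵥ u) k ^ 2 := by
  have hSQ : S = Qᵀᵀ * diagonal d * Qᵀ := by
    rw [transpose_transpose, ← hS, Matrix.mul_assoc, mul_eq_one_comm.1 hQ, Matrix.mul_one]
  conv_lhs => rw [hSQ, dotProduct_transpose_mul_mul_mulVec]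
  simp only [dotProduct, mulVec_diagonal]
  exact Finset.sum_congr rfl fun k _ => by ring

-- `U` is too large to miss the span of the eigenvectors indexed by `J`.
theorem le_of_forall_eigenvalue_ge {ι : Type*} [Fintype ι] [DecidableEq ι] {S Q : Matrix ι ι ℝ}
    {d : ι → ℝ} (hQ : Qᵀ * Q = 1) (hS : S * Q = Q * diagonal d) {J : Finset ι} {a t : ℝ}
    (hJ : ∀ j ∈ J, a ≤ d j) {U : Submodule ℝ (ι → ℝ)}
    (hU : Fintype.card ι < Module.finrank ℝ U + J.card)
    (h : ∀ u ∈ U, u ⬝ᵥ S *ᵥ u ≤ t * (u ⬝ᵥ u)) : a ≤ t := by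
  let coords : U →ₗ[ℝ] ({k // k ∉ J} → ℝ) :=
    LinearMap.funLeft ℝ ℝ Subtype.val ∘ₗ mulVecLin Qᵀ ∘ₗ U.subtype
  have hker : LinearMap.ker coords ≠ ⊥ := by
    apply LinearMap.ker_ne_bot_of_finrank_lt
    have hJι := J.card_le_univ
    rw [Module.finrank_fintype_fun_eq_card, Fintype.card_subtype_compl, Fintype.card_coe]
    omega
  obtain ⟨⟨u, hu⟩, hcoords, hu0⟩ := (Submodule.ne_bot_iff _).1 hker
  have hvanish (k) (hk : k ∉ J) : (Qᵀ *ᵥ u) k = 0 := congrFun (LinearMap.mem_ker.1 hcoords) ⟨k, hk⟩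
  have hnorm : u ⬝ᵥ u = ∑ k, (Qᵀ *ᵥ u) k ^ 2 := by
    simpa using dotProduct_mulVec_eq_sum_eigenvalues (S := 1) (d := 1) hQ (by simp) u
  have hpos : 0 < u ⬝ᵥ u := dotProduct_self_pos fun h0 => hu0 (Subtype.ext h0)
  refine le_of_mul_le_mul_right ?_ hpos
  calc a * (u ⬝ᵥ u) ≤ ∑ k, d k * (Qᵀ *ᵥ u) k ^ 2 := by
        rw [hnorm, Finset.mul_sum]
        refine Finset.sum_le_sum fun k _ => ?_
        by_cases hk : k ∈ J
        · exact mul_le_mul_of_nonneg_right (hJ k hk) (sq_nonneg _)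
        · simp [hvanish k hk]
    _ = u ⬝ᵥ S *ᵥ u := (dotProduct_mulVec_eq_sum_eigenvalues hQ hS u).symm
    _ ≤ t * (u ⬝ᵥ u) := h u hu

variable {n : ℕ} {X S QX QS : Matrix (Fin n) (Fin n) ℝ} {φ ψ : Fin n → ℝ} {μ t : ℝ}
  {U : Submodule ℝ (Fin n → ℝ)} {i : Fin n}

theorem eigenvalue_rev_le (hQS : QSᵀ * QS = 1) (hS : S * QS = QS * diagonal ψ) (hψ : Antitone ψ)
    (hU : ∀ u ∈ U, u ⬝ᵥ S *ᵥ u ≤ t * (u ⬝ᵥ u)) (hi : i < Module.finrank ℝ U) :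
    ψ i.rev ≤ t := by
  refine le_of_forall_eigenvalue_ge hQS hS (J := Finset.Iic i.rev)
    (fun j hj => hψ (Finset.mem_Iic.1 hj)) ?_ hU
  rw [Fintype.card_fin, Fin.card_Iic, Fin.val_rev]
  omega

theorem eigenvalue_pos (hX : X.PosDef) (hQX : QXᵀ * QX = 1) (hXQ : X * QX = QX * diagonal φ) :
    0 < φ i := by
  have hdiag : QXᵀ * X * QX = diagonal φ := by
    rw [Matrix.mul_assoc, hXQ, ← Matrix.mul_assoc, hQX, Matrix.one_mul]
  have hpos : (QXᵀ * X * QX).PosDef :=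
    hX.conjTranspose_mul_mul_same (mulVec_injective_of_isUnit (IsUnit.of_mul_eq_one_right _ hQX))
  rw [hdiag] at hpos
  exact posDef_diagonal_iff.1 hpos i

theorem div_eigenvalue_le (hμ : 0 < μ) (hX : X.PosDef) (hSX : S * X = μ • 1)
    (hQX : QXᵀ * QX = 1) (hXQ : X * QX = QX * diagonal φ) (hφ : Antitone φ)
    (hU : ∀ u ∈ U, u ⬝ᵥ S *ᵥ u ≤ t * (u ⬝ᵥ u)) (hi : i < Module.finrank ℝ U) :
    μ / φ i ≤ t := by
  have hpos (k) : 0 < φ k := eigenvalue_pos hX hQX hXQ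
  have hSQ : S * QX = QX * diagonal fun k => μ / φ k := by
    have hinv : diagonal φ * diagonal (fun k => (φ k)⁻¹) = 1 := by
      rw [diagonal_mul_diagonal, ← diagonal_one]
      exact congrArg diagonal (funext fun k => mul_inv_cancel₀ (hpos k).ne')
    calc S * QX = S * (QX * diagonal φ) * diagonal (fun k => (φ k)⁻¹) := by
          rw [Matrix.mul_assoc, Matrix.mul_assoc, hinv, Matrix.mul_one]
      _ = μ • QX * diagonal (fun k => (φ k)⁻¹) := by
          rw [← hXQ, ← Matrix.mul_assoc, hSX, smul_mul, Matrix.one_mul]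
      _ = QX * diagonal fun k => μ / φ k := by
          ext a k
          rw [mul_diagonal, mul_diagonal, Matrix.smul_apply, smul_eq_mul]
          ring
  refine le_of_forall_eigenvalue_ge hQX hSQ (J := Finset.Ici i) (fun j hj => ?_) ?_ hU
  · exact div_le_div_of_nonneg_left hμ.le (hpos j) (hφ (Finset.mem_Ici.1 hj))
  · rw [Fintype.card_fin, Fin.card_Ici]
    omega

theorem eigenvalue_rev_le_and_div_le_eigenvalue (hμ : 0 < μ) (ht : 0 < t) (hX : X.PosDef)
    (hSX : S * X = μ • 1) (hQX : QXᵀ * QX = 1) (hXQ : X * QX = QX * diagonal φ)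
    (hφ : Antitone φ) (hQS : QSᵀ * QS = 1) (hSQ : S * QS = QS * diagonal ψ) (hψ : Antitone ψ)
    (hU : ∀ u ∈ U, u ⬝ᵥ S *ᵥ u ≤ t * (u ⬝ᵥ u)) (hi : i < Module.finrank ℝ U) :
    ψ i.rev ≤ t ∧ μ / t ≤ φ i :=
  ⟨eigenvalue_rev_le hQS hSQ hψ hU hi, (div_le_comm₀ (eigenvalue_pos hX hQX hXQ) ht).1 <|
    div_eigenvalue_le hμ hX hSX hQX hXQ hφ hU hi⟩

end CourantFischer

section LamMin

variable {ι : Type*} [Fintype ι] {k : ℕ}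

theorem sum_sq_eq_dotProduct_self (x : ι → ℝ) : ∑ i, x i ^ 2 = x ⬝ᵥ x := by
  simp only [dotProduct, sq]

theorem lamMin_mul_dotProduct_self_le {M : Matrix (Fin k) (Fin k) ℝ} (hM : M.PosSemidef)
    (x : Fin k → ℝ) : lamMin M * (x ⬝ᵥ x) ≤ x ⬝ᵥ M *ᵥ x := by
  rcases eq_or_ne x 0 with rfl | hx
  · simp
  set s := √(x ⬝ᵥ x)
  have hs0 : 0 < s := Real.sqrt_pos.2 (dotProduct_self_pos hx)
  have hss : x ⬝ᵥ x = s * s := (Real.mul_self_sqrt (dotProduct_self_pos hx).le).symm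
  have hle : lamMin M ≤ (s⁻¹ • x) ⬝ᵥ M *ᵥ (s⁻¹ • x) := by
    refine csInf_le ⟨0, ?_⟩ ⟨s⁻¹ • x, ?_, rfl⟩
    · rintro _ ⟨z, _, rfl⟩
      exact hM.dotProduct_mulVec_nonneg z
    · rw [sum_sq_eq_dotProduct_self, smul_dotProduct, dotProduct_smul, hss,
        smul_eq_mul, smul_eq_mul]
      field_simp
  rw [mulVec_smul, smul_dotProduct, dotProduct_smul, smul_eq_mul, smul_eq_mul, ← mul_assoc,
    ← mul_inv, inv_mul_eq_div, ← hss, le_div_iff₀ (dotProduct_self_pos hx)] at hle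
  exact hle

theorem lamMin_pos (hk : 0 < k) {M : Matrix (Fin k) (Fin k) ℝ} (hM : M.PosDef) :
    0 < lamMin M := by
  obtain ⟨δ, hδ, hMδ⟩ := exists_pos_sub_smul_one_posSemidef hM
  refine hδ.trans_le (le_csInf ⟨_, Pi.single ⟨0, hk⟩ 1, ?_, rfl⟩ ?_)
  · rw [sum_sq_eq_dotProduct_self, single_one_dotProduct, Pi.single_eq_same]
  · rintro _ ⟨x, hx, rfl⟩
    have hnonneg := hMδ.dotProduct_mulVec_nonneg x
    rw [star_trivial, sub_mulVec, smul_mulVec, one_mulVec, dotProduct_sub, dotProduct_smul,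
      ← sum_sq_eq_dotProduct_self, hx, smul_eq_mul, mul_one] at hnonneg
    linarith

theorem lamMin_mul_trace_le {M S : Matrix (Fin k) (Fin k) ℝ} (hM : M.PosSemidef)
    (hS : S.PosSemidef) : lamMin M * S.trace ≤ (S * M).trace := by
  have hsub : (M - lamMin M • (1 : Matrix (Fin k) (Fin k) ℝ)).PosSemidef := by
    refine .of_dotProduct_mulVec_nonneg
      (hM.isHermitian.sub (isHermitian_one.smul (.all _))) fun x => ?_
    rw [star_trivial, sub_mulVec, smul_mulVec, one_mulVec, dotProduct_sub, dotProduct_smul,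
      smul_eq_mul, sub_nonneg]
    exact lamMin_mul_dotProduct_self_le hM x
  have hnonneg := trace_mul_nonneg hS hsub
  rw [Matrix.mul_sub, trace_sub, Matrix.mul_smul, Matrix.mul_one, trace_smul,
    smul_eq_mul] at hnonneg
  linarith

end LamMin

section FacialReduction

variable {ι : Type*} [Fintype ι]

open Topology in
theorem isOpen_setOf_forall_dotProduct_mulVec_pos :
    IsOpen {M : Matrix ι ι ℝ | ∀ x, x ≠ 0 → 0 < x ⬝ᵥ M *ᵥ x} := by
  refine isOpen_iff_mem_nhds.2 fun M hM => ?_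
  have hsphere : ∀ᶠ N in 𝓝 M, ∀ x ∈ Metric.sphere (0 : ι → ℝ) 1, 0 < x ⬝ᵥ N *ᵥ x := by
    refine (isCompact_sphere _ _).eventually_forall_of_forall_eventually fun x hx => ?_
    have hcont : Continuous fun p : Matrix ι ι ℝ × (ι → ℝ) => p.2 ⬝ᵥ p.1 *ᵥ p.2 := by fun_prop
    exact hcont.continuousAt.eventually_const_lt (hM x (ne_zero_of_mem_unit_sphere ⟨x, hx⟩))
  refine hsphere.mono fun N hN x hx => ?_
  have hpos := hN (‖x‖⁻¹ • x) (by simp [norm_smul, hx])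
  rw [mulVec_smul, smul_dotProduct, dotProduct_smul, smul_eq_mul, smul_eq_mul, ← mul_assoc] at hpos
  exact (pos_iff_pos_of_mul_pos hpos).1 (by positivity)

theorem exists_trace_mul_eq (f : Matrix ι ι ℝ →ₗ[ℝ] ℝ) :
    ∃ Z : Matrix ι ι ℝ, ∀ M, (Z * M).trace = f M := by
  classical
  refine ⟨of fun i j => f (single j i 1), fun M => ?_⟩
  have hsingle (i j : ι) : f (single i j (M i j)) = f (single i j 1) * M i j := by
    rw [mul_comm, ← smul_eq_mul, ← map_smul, smul_single, smul_eq_mul, mul_one]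
  calc _ = ∑ j, ∑ i, f (single i j (M i j)) := by
        simp only [trace, diag_apply, mul_apply, of_apply, hsingle]
    _ = f M := by
        rw [Finset.sum_comm]
        simp only [← map_sum]
        exact congrArg f (sum_sum_single M)

theorem exists_functional_neg_on_posDef {ι : Type*} [Finite ι] {L : Submodule ℝ (Matrix ι ι ℝ)}
    (hsymm : ∀ M ∈ L, M.IsHermitian) (hL : ∀ M ∈ L, ¬ M.PosDef) :
    ∃ f : StrongDual ℝ (Matrix ι ι ℝ), (∀ M, M.PosDef → f M < 0) ∧ ∀ M ∈ L, f M = 0 := by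
  cases nonempty_fintype ι
  have : LocallyConvexSpace ℝ (Matrix ι ι ℝ) :=
    inferInstanceAs (LocallyConvexSpace ℝ (ι → ι → ℝ))
  have hconv : Convex ℝ {M : Matrix ι ι ℝ | ∀ x, x ≠ 0 → 0 < x ⬝ᵥ M *ᵥ x} := by
    intro M hM N hN a b ha hb hab x hx
    rw [add_mulVec, smul_mulVec, smul_mulVec, dotProduct_add, dotProduct_smul, dotProduct_smul]
    exact convex_Ioi (𝕜 := ℝ) (0 : ℝ) (hM x hx) (hN x hx) ha hb hab
  have hdisj : Disjoint {M : Matrix ι ι ℝ | ∀ x, x ≠ 0 → 0 < x ⬝ᵥ M *ᵥ x} L :=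
    disjoint_left.2 fun M hM hML =>
      hL M hML (.of_dotProduct_mulVec_pos (hsymm M hML) fun x hx => hM x hx)
  obtain ⟨f, u, hneg, hnonneg⟩ := geometric_hahn_banach_open hconv
    isOpen_setOf_forall_dotProduct_mulVec_pos L.convex hdisj
  have hu : u ≤ 0 := by simpa using hnonneg 0 L.zero_mem
  refine ⟨f, fun M hM => (hneg M fun x hx => hM.dotProduct_mulVec_pos hx).trans_le hu,
    fun M hM => ?_⟩
  by_contra! hne
  have hle := hnonneg (((u - 1) / f M) • M) (L.smul_mem _ hM)
  rw [map_smul, smul_eq_mul, div_mul_cancel₀ _ hne] at hle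
  linarith

theorem exists_posSemidef_trace_mul_eq_zero {L : Submodule ℝ (Matrix ι ι ℝ)}
    (hsymm : ∀ M ∈ L, M.IsHermitian) (hL : ∀ M ∈ L, ¬ M.PosDef) :
    ∃ Z : Matrix ι ι ℝ, Z.PosSemidef ∧ Z ≠ 0 ∧ ∀ M ∈ L, (Z * M).trace = 0 := by
  classical
  obtain ⟨f, hneg, hzero⟩ := exists_functional_neg_on_posDef hsymm hL
  obtain ⟨Z, hZ⟩ : ∃ Z : Matrix ι ι ℝ, ∀ M, (Z * M).trace = f M :=
    exists_trace_mul_eq f.toLinearMap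
  have htrace {M : Matrix ι ι ℝ} (hM : M.IsHermitian) : ((-(Z + Zᵀ)) * M).trace = -2 * f M := by
    have hT : (Zᵀ * M).trace = (Z * M).trace := by
      rw [← trace_transpose, transpose_mul, transpose_transpose, trace_mul_comm]
      exact congrArg (fun N => (Z * N).trace) hM
    rw [Matrix.neg_mul, trace_neg, Matrix.add_mul, trace_add, hT, hZ]
    ring
  have hone : f 1 < 0 := hneg 1 .one
  refine ⟨-(Z + Zᵀ), .of_dotProduct_mulVec_nonneg ?_ fun x => ?_, fun h0 => ?_, fun M hM => ?_⟩
  · exact (isSymm_add_transpose_self Z).neg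
  · have hx : (vecMulVec x x).PosSemidef := posSemidef_vecMulVec_self_star x
    have hquad : x ⬝ᵥ (-(Z + Zᵀ)) *ᵥ x = -2 * f (vecMulVec x x) := by
      rw [← htrace hx.isHermitian, mul_vecMulVec, trace_vecMulVec, dotProduct_comm]
    have hle : f (vecMulVec x x) ≤ 0 := by
      by_contra! hlt
      have hδ : 0 < f (vecMulVec x x) / -f 1 := div_pos hlt (neg_pos.2 hone)
      have hlt' := hneg _ (.posSemidef_add hx (PosDef.one.smul hδ))
      rw [map_add, map_smul, smul_eq_mul, div_neg, neg_mul, div_mul_cancel₀ _ hone.ne] at hlt'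
      linarith
    rw [star_trivial, hquad]
    linarith
  · have h1 := htrace isHermitian_one
    rw [h0, Matrix.zero_mul, trace_zero] at h1
    linarith
  · rw [htrace (hsymm M hM), hzero M hM, mul_zero]

end FacialReduction

section ErrorBound

open Asymptotics Filter

variable {ι κ : Type*} [Fintype κ]

/-- The embedding `N ↦ U N Uᵀ` of the matrices over the range of `U`. -/
def conjLinearMap (U : Matrix ι κ ℝ) : Matrix κ κ ℝ →ₗ[ℝ] Matrix ι ι ℝ where
  toFun N := U * N * Uᵀ
  map_add' N N' := by rw [Matrix.mul_add, Matrix.add_mul]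
  map_smul' c N := by rw [Matrix.mul_smul, Matrix.smul_mul, RingHom.id_apply]

@[simp]
theorem conjLinearMap_apply (U : Matrix ι κ ℝ) (N : Matrix κ κ ℝ) :
    conjLinearMap U N = U * N * Uᵀ := rfl

variable [Fintype ι]

/-- `S₀` is a nonzero positive semidefinite element of `L` of maximal rank, expressed through
kernels: `ker S₀` lies in the kernel of every positive semidefinite element of `L`. -/
structure IsMaximalPosSemidef (L : Submodule ℝ (Matrix ι ι ℝ)) (S₀ : Matrix ι ι ℝ) : Prop where
  mem : S₀ ∈ L
  posSemidef : S₀.PosSemidef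
  ne_zero : S₀ ≠ 0
  mulVec_eq_zero : ∀ M ∈ L, M.PosSemidef → ∀ v, S₀ *ᵥ v = 0 → M *ᵥ v = 0

/-- A family of positive semidefinite matrices, bounded along `l`, whose distance to the subspace
`L` is `O(g)` for a bounded rate `g`. The distance is measured by the linear functionals
vanishing on `L`. -/
structure IsApproxMem {α : Type*} (l : Filter α) (L : Submodule ℝ (Matrix ι ι ℝ))
    (S : α → Matrix ι ι ℝ) (g : α → ℝ) : Prop where
  posSemidef : ∀ᶠ p in l, (S p).PosSemidef
  trace_isBigO : (fun p => (S p).trace) =O[l] (1 : α → ℝ)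
  rate_nonneg : 0 ≤ᶠ[l] g
  rate_isBigO : g =O[l] (1 : α → ℝ)
  residual_isBigO : ∀ f ∈ L.dualAnnihilator, (fun p => f (S p)) =O[l] g

variable {L : Submodule ℝ (Matrix ι ι ℝ)} {S₀ W X Z H : Matrix ι ι ℝ}
  {U : Matrix ι κ ℝ}

theorem IsMaximalPosSemidef.eq_zero_of_mul_eq_zero (h : IsMaximalPosSemidef L S₀)
    {M : Matrix ι ι ℝ} (hML : M ∈ L) (hM : M.PosDef) (hW : S₀ * W = 0) : W = 0 := by
  classical
  have hMW : M * W = 0 := Matrix.ext_of_mulVec_single fun i => by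
    rw [← mulVec_mulVec, zero_mulVec]
    exact h.mulVec_eq_zero M hML hM.posSemidef _ (by rw [mulVec_mulVec, hW, zero_mulVec])
  exact hM.isUnit.mul_right_eq_zero.1 hMW

theorem IsMaximalPosSemidef.mul_eq_zero (h : IsMaximalPosSemidef L S₀) (hZ : Z.PosSemidef)
    (hZL : ∀ M ∈ L, (Z * M).trace = 0) : Z * S₀ = 0 := by
  open scoped Matrix.Norms.Frobenius in
  have hle := frobenius_norm_mul_sq_le hZ h.posSemidef
  rw [hZL S₀ h.mem, mul_zero] at hle
  exact norm_eq_zero.1 (pow_eq_zero_iff two_ne_zero |>.1 (hle.antisymm (sq_nonneg _)))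

theorem isHermitian_of_conjLinearMap [DecidableEq κ] {N : Matrix κ κ ℝ}
    (hN : (conjLinearMap U N).IsHermitian) (hU : Uᵀ * U = 1) : N.IsHermitian := by
  have hUN : Uᵀ * conjLinearMap U N * U = N := by
    rw [conjLinearMap_apply, ← Matrix.mul_assoc, ← Matrix.mul_assoc, hU, Matrix.one_mul,
      Matrix.mul_assoc, hU, Matrix.mul_one]
  rw [← hUN]
  exact isHermitian_conjTranspose_mul_mul U hN

theorem trace_transpose_mul_mul_mul (W : Matrix ι ι ℝ) (U : Matrix ι κ ℝ) (N : Matrix κ κ ℝ) :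
    (Uᵀ * W * U * N).trace = (W * conjLinearMap U N).trace := by
  rw [conjLinearMap_apply, Matrix.mul_assoc Uᵀ, Matrix.mul_assoc Uᵀ, trace_mul_comm]
  simp only [Matrix.mul_assoc]

theorem mul_transpose_mul_eq_self_iff (hX : X.IsHermitian) :
    U * Uᵀ * X = X ↔ X * (U * Uᵀ) = X := by
  have hXT : Xᵀ = X := hX
  rw [← transpose_inj, transpose_mul, transpose_mul, transpose_transpose, hXT]

theorem conjLinearMap_compression (hX : X.IsHermitian) (hUX : U * Uᵀ * X = X) :
    conjLinearMap U (Uᵀ * X * U) = X := by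
  calc conjLinearMap U (Uᵀ * X * U) = U * Uᵀ * X * (U * Uᵀ) := by
        simp only [conjLinearMap_apply, Matrix.mul_assoc]
    _ = X := by rw [hUX, (mul_transpose_mul_eq_self_iff hX).1 hUX]

variable {α : Type*} {l : Filter α} {S : α → Matrix ι ι ℝ} {g : α → ℝ}

theorem IsApproxMem.sqrt_rate_isBigO (h : IsApproxMem l L S g) :
    (fun p => √(g p)) =O[l] (1 : α → ℝ) := by
  have hrpow := h.rate_isBigO.rpow (r := 1 / 2) (by positivity)
    (Eventually.of_forall fun _ => zero_le_one)
  refine hrpow.congr (fun _ => (Real.sqrt_eq_rpow _).symm) fun _ => ?_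
  exact Real.one_rpow _

theorem IsApproxMem.isBigO_rpow_rate (h : IsApproxMem l L S g) {θ : ℝ} (hθ : 0 ≤ θ)
    (hθ1 : θ ≤ 1) : g =O[l] fun p => g p ^ θ := by
  have hone : (fun p => g p ^ (1 - θ)) =O[l] (1 : α → ℝ) :=
    (h.rate_isBigO.rpow (sub_nonneg.2 hθ1) (Eventually.of_forall fun _ => zero_le_one)).congr_right
      fun _ => Real.one_rpow _
  refine ((isBigO_refl (fun p => g p ^ θ) l).mul hone).congr' ?_
    (Eventually.of_forall fun p => mul_one _)
  refine h.rate_nonneg.mono fun p hp => ?_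
  beta_reduce
  rw [← Real.rpow_add_of_nonneg hp hθ (sub_nonneg.2 hθ1), add_sub_cancel, Real.rpow_one]

section Compression

variable [DecidableEq ι]

theorem IsMaximalPosSemidef.conjLinearMap_transpose_mul_mul (h : IsMaximalPosSemidef L S₀)
    (hZS₀ : Z * S₀ = 0) (hUH : U * Uᵀ + H * Z = 1) : conjLinearMap U (Uᵀ * S₀ * U) = S₀ := by
  refine conjLinearMap_compression h.posSemidef.isHermitian ?_
  rw [eq_sub_of_add_eq hUH, Matrix.sub_mul, Matrix.mul_assoc H, hZS₀, Matrix.mul_zero, sub_zero,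
    Matrix.one_mul]

theorem IsMaximalPosSemidef.compress [DecidableEq κ] (h : IsMaximalPosSemidef L S₀)
    (hZS₀ : Z * S₀ = 0) (hU : Uᵀ * U = 1) (hUH : U * Uᵀ + H * Z = 1) :
    IsMaximalPosSemidef (L.comap (conjLinearMap U)) (Uᵀ * S₀ * U) := by
  have hS₀ := h.conjLinearMap_transpose_mul_mul hZS₀ hUH
  refine ⟨?_, h.posSemidef.conjTranspose_mul_mul_same U, fun h0 => h.ne_zero ?_,
    fun M hML hM v hv => ?_⟩
  · rw [Submodule.mem_comap, hS₀]
    exact h.mem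
  · rw [← hS₀, h0, map_zero]
  · have hv' : S₀ *ᵥ U *ᵥ v = 0 := by
      rw [← hS₀, conjLinearMap_apply, mulVec_mulVec, Matrix.mul_assoc _ Uᵀ, hU, Matrix.mul_one,
        ← mulVec_mulVec, hv, mulVec_zero]
    have hMv := h.mulVec_eq_zero _ hML (hM.mul_mul_conjTranspose_same U) _ hv'
    calc M *ᵥ v = Uᵀ *ᵥ (U * M * Uᵀ) *ᵥ U *ᵥ v := by
          simp only [mulVec_mulVec, Matrix.mul_assoc, hU, Matrix.mul_one]
          rw [← Matrix.mul_assoc, hU, Matrix.one_mul]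
      _ = 0 := by rw [← conjLinearMap_apply, hMv, mulVec_zero]

open scoped Matrix.Norms.Frobenius in
theorem IsApproxMem.isBigO_mul_sqrt (h : IsApproxMem l L S g) (hZ : Z.PosSemidef)
    (hZL : ∀ M ∈ L, (Z * M).trace = 0) : (fun p => Z * S p) =O[l] fun p => √(g p) := by
  have hres : (fun p => (Z * S p).trace) =O[l] g :=
    h.residual_isBigO ((traceLinearMap ι ℝ ℝ).comp (LinearMap.mulLeft ℝ Z))
      ((Submodule.mem_dualAnnihilator _).2 hZL)
  have hprod : (fun p => Z.trace * (S p).trace * (Z * S p).trace) =O[l] g := by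
    simpa using (h.trace_isBigO.const_mul_left Z.trace).mul hres
  refine IsBigO.of_norm_left (IsBigO.of_pow two_ne_zero (IsBigO.trans ?_ hprod |>.trans ?_))
  · refine IsBigO.of_bound 1 (h.posSemidef.mono fun p hp => ?_)
    rw [one_mul, Pi.pow_apply, Real.norm_of_nonneg (sq_nonneg _)]
    exact (frobenius_norm_mul_sq_le hZ hp).trans (le_abs_self _)
  · exact EventuallyEq.isBigO (h.rate_nonneg.mono fun p hp => (Real.sq_sqrt hp).symm)

open scoped Matrix.Norms.Frobenius in
theorem IsApproxMem.isBigO_sub_compression (h : IsApproxMem l L S g) (hZ : Z.PosSemidef)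
    (hZL : ∀ M ∈ L, (Z * M).trace = 0) (hUH : U * Uᵀ + H * Z = 1)
    (f : Matrix ι ι ℝ →ₗ[ℝ] ℝ) :
    (fun p => f (S p - conjLinearMap U (Uᵀ * S p * U))) =O[l] fun p => √(g p) := by
  let defect : Matrix ι ι ℝ →ₗ[ℝ] Matrix ι ι ℝ :=
    LinearMap.mulLeft ℝ H + LinearMap.mulLeft ℝ (U * Uᵀ) ∘ₗ
      (transposeLinearEquiv ι ι ℝ ℝ).toLinearMap ∘ₗ LinearMap.mulLeft ℝ H
  have hdefect {M : Matrix ι ι ℝ} (hM : M.IsHermitian) :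
      defect (Z * M) = M - conjLinearMap U (Uᵀ * M * U) := by
    have hMT : Mᵀ = M := hM
    have hR : (H * Z)ᵀ = 1 - U * Uᵀ := by
      rw [← sub_eq_of_eq_add' hUH.symm, transpose_sub, transpose_one, transpose_mul,
        transpose_transpose]
    have hdef : defect (Z * M) = H * Z * M + U * Uᵀ * (M * (H * Z)ᵀ) := by
      rw [← hMT, ← transpose_mul, hMT, Matrix.mul_assoc H]
      rfl
    rw [hdef, hR, ← sub_eq_of_eq_add' hUH.symm, conjLinearMap_apply]
    simp only [Matrix.sub_mul, Matrix.mul_sub, Matrix.mul_assoc, Matrix.one_mul, Matrix.mul_one]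
    abel
  have hcont := ((f ∘ₗ defect).toContinuousLinearMap.isBigO_comp _ l).trans
    (h.isBigO_mul_sqrt hZ hZL)
  refine hcont.congr' (h.posSemidef.mono fun p hp => ?_) .rfl
  exact congrArg f (hdefect hp.isHermitian)

theorem IsApproxMem.compress [DecidableEq κ] (h : IsApproxMem l L S g) (hZ : Z.PosSemidef)
    (hZL : ∀ M ∈ L, (Z * M).trace = 0) (hU : Uᵀ * U = 1) (hUH : U * Uᵀ + H * Z = 1) :
    IsApproxMem l (L.comap (conjLinearMap U)) (fun p => Uᵀ * S p * U) fun p => √(g p) where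
  posSemidef := h.posSemidef.mono fun p hp => hp.conjTranspose_mul_mul_same U
  trace_isBigO := by
    have hdiff := h.isBigO_sub_compression hZ hZL hUH (traceLinearMap ι ℝ ℝ)
    refine (h.trace_isBigO.sub (hdiff.trans h.sqrt_rate_isBigO)).congr_left fun p => ?_
    rw [traceLinearMap_apply, trace_sub, sub_sub_cancel, conjLinearMap_apply, trace_mul_comm,
      ← Matrix.mul_assoc, hU, Matrix.one_mul]
  rate_nonneg := Eventually.of_forall fun p => Real.sqrt_nonneg (g p)
  rate_isBigO := h.sqrt_rate_isBigO
  residual_isBigO f hf := by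
    have hmem : f ∈ LinearMap.range (L.mkQ ∘ₗ conjLinearMap U).dualMap := by
      rwa [LinearMap.range_dualMap_eq_dualAnnihilator_ker, LinearMap.ker_comp, Submodule.ker_mkQ]
    obtain ⟨e, rfl⟩ := hmem
    have hres := h.residual_isBigO (e ∘ₗ L.mkQ) ((Submodule.mem_dualAnnihilator _).2 fun M hM => by
      rw [LinearMap.comp_apply, Submodule.mkQ_apply, (Submodule.Quotient.mk_eq_zero L).2 hM,
        map_zero])
    have hg : g =O[l] fun p => √(g p) := by
      simpa only [Real.sqrt_eq_rpow] using
        h.isBigO_rpow_rate (θ := 1 / 2) (by norm_num) (by norm_num)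
    refine ((hres.trans hg).sub (h.isBigO_sub_compression hZ hZL hUH (e ∘ₗ L.mkQ))).congr_left
      fun p => ?_
    rw [map_sub, sub_sub_cancel]
    rfl

theorem eq_zero_or_exists_facial_reduction (hL : ∀ M ∈ L, M.IsHermitian)
    (hS₀ : IsMaximalPosSemidef L S₀) (hS : IsApproxMem l L S g) (hW : S₀ * W = 0) :
    W = 0 ∨ ∃ (s : Finset ι) (U : Matrix ι s ℝ), s.card < Fintype.card ι ∧ Uᵀ * U = 1 ∧
      conjLinearMap U (Uᵀ * S₀ * U) = S₀ ∧
      IsMaximalPosSemidef (L.comap (conjLinearMap U)) (Uᵀ * S₀ * U) ∧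
      IsApproxMem l (L.comap (conjLinearMap U)) (fun p => Uᵀ * S p * U) (fun p => √(g p)) ∧
      ∀ f : Matrix ι ι ℝ →ₗ[ℝ] ℝ,
        (fun p => f (S p - conjLinearMap U (Uᵀ * S p * U))) =O[l] fun p => √(g p) := by
  by_cases hpos : ∃ M ∈ L, M.PosDef
  · obtain ⟨M, hML, hM⟩ := hpos
    exact .inl (hS₀.eq_zero_of_mul_eq_zero hML hM hW)
  · push Not at hpos
    obtain ⟨Z, hZ, hZne, hZL⟩ := exists_posSemidef_trace_mul_eq_zero hL hpos
    have hZS₀ := hS₀.mul_eq_zero hZ hZL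
    obtain ⟨s, U, H, hU, hZU, hUH⟩ := exists_isometry_onto_ker hZ.isHermitian
    have hlt := card_lt_of_isometry_of_mul_eq_zero hU hZU hZne
    rw [Fintype.card_coe] at hlt
    exact .inr ⟨s, U, hlt, hU, hS₀.conjLinearMap_transpose_mul_mul hZS₀ hUH,
      hS₀.compress hZS₀ hU hUH, hS.compress hZ hZL hU hUH, hS.isBigO_sub_compression hZ hZL hUH⟩

end Compression

theorem isBigO_trace_mul_of_isApproxMem {α : Type*} {l : Filter α} (k : ℕ) {ι : Type*} [Fintype ι]
    {L : Submodule ℝ (Matrix ι ι ℝ)} (hL : ∀ M ∈ L, M.IsHermitian) {S₀ W : Matrix ι ι ℝ}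
    (hS₀ : IsMaximalPosSemidef L S₀) (hW : S₀ * W = 0) {S : α → Matrix ι ι ℝ} {g : α → ℝ}
    (hS : IsApproxMem l L S g) (hcard : Fintype.card ι ≤ k + 1) :
    (fun p => (W * S p).trace) =O[l] fun p => g p ^ ((1 / 2 : ℝ) ^ k) := by
  classical
  induction k generalizing ι g with
  | zero =>
    obtain rfl | ⟨s, U, hlt, -, -, hS₀', -⟩ := eq_zero_or_exists_facial_reduction hL hS₀ hS hW
    · simpa using isBigO_zero _ _
    · have : IsEmpty s := Finset.isEmpty_coe_sort.2 (Finset.card_eq_zero.1 (by omega))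
      exact absurd (Subsingleton.elim _ _) hS₀'.ne_zero
  | succ k ih =>
    obtain rfl | ⟨s, U, hlt, hU, hS₀U, hS₀', hS', hdefect⟩ :=
      eq_zero_or_exists_facial_reduction hL hS₀ hS hW
    · simpa using isBigO_zero _ _
    have hexp : (fun p => √(g p) ^ ((1 / 2 : ℝ) ^ k)) =ᶠ[l]
        fun p => g p ^ ((1 / 2 : ℝ) ^ (k + 1)) :=
      hS.rate_nonneg.mono fun p hp => by
        beta_reduce
        rw [Real.sqrt_eq_rpow, ← Real.rpow_mul hp, pow_succ']
    have hW' : Uᵀ * S₀ * U * (Uᵀ * W * U) = 0 := by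
      calc Uᵀ * S₀ * U * (Uᵀ * W * U) = Uᵀ * (U * (Uᵀ * S₀ * U) * Uᵀ) * W * U := by
            simp only [← Matrix.mul_assoc, hU, Matrix.one_mul]
        _ = 0 := by rw [← conjLinearMap_apply, hS₀U, Matrix.mul_assoc Uᵀ, hW, Matrix.mul_zero,
            Matrix.zero_mul]
    have hface := ih (fun N hN => isHermitian_of_conjLinearMap (hL _ hN) hU) hS₀' hW' hS'
      (by rw [Fintype.card_coe]; omega)
    have hrest := (hdefect (traceLinearMap ι ℝ ℝ ∘ₗ LinearMap.mulLeft ℝ W)).trans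
      (hS'.isBigO_rpow_rate (θ := (1 / 2) ^ k) (by positivity)
        (pow_le_one₀ (by norm_num) (by norm_num)))
    refine ((hface.add hrest).trans_eventuallyEq hexp).congr_left fun p => ?_
    rw [LinearMap.comp_apply, LinearMap.mulLeft_apply, traceLinearMap_apply, Matrix.mul_sub,
      trace_sub, trace_transpose_mul_mul_mul, add_sub_cancel]

end ErrorBound

section RangeCompression

theorem mulVec_mulVec_transpose_of_mem_range {ι κ : Type*} [Fintype ι] [Fintype κ] [DecidableEq κ]
    {Q : Matrix ι κ ℝ} (hQ : Qᵀ * Q = 1) {v : ι → ℝ}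
    (hv : v ∈ LinearMap.range Q.mulVecLin) : Q *ᵥ Qᵀ *ᵥ v = v := by
  obtain ⟨w, rfl⟩ := hv
  rw [mulVecLin_apply, mulVec_mulVec _ Qᵀ, hQ, one_mulVec]

theorem conjLinearMap_compression_of_ker_le {ι κ : Type*} [Fintype ι] [Fintype κ]
    [DecidableEq κ] {Q : Matrix ι κ ℝ} {X₀ X : Matrix ι ι ℝ} (hX₀ : X₀.IsHermitian)
    (hX : X.IsHermitian) (hQ : Qᵀ * Q = 1)
    (hrange : LinearMap.range X₀.mulVecLin ≤ LinearMap.range Q.mulVecLin)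
    (hker : ∀ v, X₀ *ᵥ v = 0 → X *ᵥ v = 0) : conjLinearMap Q (Qᵀ * X * Q) = X := by
  classical
  have hX₀Q : X₀ * (Q * Qᵀ) = X₀ := (mul_transpose_mul_eq_self_iff hX₀).1 <|
    Matrix.ext_of_mulVec_single fun i => by
      rw [← mulVec_mulVec, ← mulVec_mulVec]
      exact mulVec_mulVec_transpose_of_mem_range hQ (hrange ⟨_, rfl⟩)
  refine conjLinearMap_compression hX ((mul_transpose_mul_eq_self_iff hX).2 ?_)
  refine Matrix.ext_of_mulVec_single fun i => ?_
  rw [← mulVec_mulVec, eq_comm, ← sub_eq_zero, ← mulVec_sub]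
  exact hker _ (by rw [mulVec_sub, mulVec_mulVec, hX₀Q, sub_self])

theorem posDef_compression_of_range_le {ι κ : Type*} [Fintype ι] [Fintype κ] [DecidableEq κ]
    {Q : Matrix ι κ ℝ} {X : Matrix ι ι ℝ} (hX : X.PosSemidef) (hQ : Qᵀ * Q = 1)
    (hrange : LinearMap.range Q.mulVecLin ≤ LinearMap.range X.mulVecLin) :
    (Qᵀ * X * Q).PosDef := by
  refine .of_dotProduct_mulVec_pos (isHermitian_conjTranspose_mul_mul Q hX.isHermitian)
    fun z hz => ?_
  rw [star_trivial, dotProduct_transpose_mul_mul_mulVec]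
  refine (hX.dotProduct_mulVec_nonneg (Q *ᵥ z)).lt_of_ne fun h0 => hz ?_
  have hXQz : X *ᵥ Q *ᵥ z = 0 := (hX.dotProduct_mulVec_zero_iff _).1 h0.symm
  obtain ⟨w, hw⟩ := hrange ⟨z, rfl⟩
  rw [mulVecLin_apply, mulVecLin_apply] at hw
  have hsymm : Xᵀ = X := hX.isHermitian
  have hQz : Q *ᵥ z = 0 := by
    rw [← dotProduct_self_eq_zero]
    nth_rw 1 [← hw]
    rw [← hsymm, mulVec_transpose, ← dotProduct_mulVec, hXQz, dotProduct_zero]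
  rw [← one_mulVec z, ← hQ, ← mulVec_mulVec, hQz, mulVec_zero]

variable {ι : Type*} [Fintype ι] {k : ℕ} {Q : Matrix ι (Fin k) ℝ} {X₀ X S : Matrix ι ι ℝ}
  {𝒳 : Set (Matrix ι ι ℝ)} {τ : ℝ}

theorem trace_compression_pos (hk : 0 < k) (hQ : Qᵀ * Q = 1) (hS : S.PosDef) :
    0 < (Qᵀ * S * Q).trace := by
  have : Nonempty (Fin k) := ⟨⟨0, hk⟩⟩
  refine PosDef.trace_pos (hS.conjTranspose_mul_mul_same ?_)
  exact Function.LeftInverse.injective (g := Qᵀ.mulVec) fun z => by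
    rw [mulVec_mulVec, hQ, one_mulVec]

theorem lamMin_compression_le (hk : 0 < k) (hQ : Qᵀ * Q = 1) (hX : X.PosSemidef) (hS : S.PosDef)
    (hQX : conjLinearMap Q (Qᵀ * X * Q) = X) :
    lamMin (Qᵀ * X * Q) ≤ (S * X).trace / (Qᵀ * S * Q).trace := by
  rw [le_div_iff₀ (trace_compression_pos hk hQ hS)]
  calc lamMin (Qᵀ * X * Q) * (Qᵀ * S * Q).trace
      ≤ (Qᵀ * S * Q * (Qᵀ * X * Q)).trace :=
        lamMin_mul_trace_le (hX.conjTranspose_mul_mul_same Q)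
          (hS.posSemidef.conjTranspose_mul_mul_same Q)
    _ = (S * X).trace := by rw [trace_transpose_mul_mul_mul, hQX]

theorem sSup_lamMin_compression_pos_and_mul_trace_le (hk : 0 < k) (hQ : Qᵀ * Q = 1)
    (hmem : X₀ ∈ 𝒳) (hpsd : ∀ X ∈ 𝒳, X.PosSemidef)
    (hker : ∀ X ∈ 𝒳, ∀ v, X₀ *ᵥ v = 0 → X *ᵥ v = 0)
    (hrange : LinearMap.range Q.mulVecLin = LinearMap.range X₀.mulVecLin)
    (hS : S.PosDef) (hτ : ∀ X ∈ 𝒳, (S * X).trace ≤ τ) :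
    0 < sSup ((fun X => lamMin (Qᵀ * X * Q)) '' 𝒳) ∧
      sSup ((fun X => lamMin (Qᵀ * X * Q)) '' 𝒳) * (Qᵀ * S * Q).trace ≤ τ := by
  have hpos := trace_compression_pos hk hQ hS
  have hle : ∀ r ∈ (fun X => lamMin (Qᵀ * X * Q)) '' 𝒳, r ≤ τ / (Qᵀ * S * Q).trace := by
    rintro _ ⟨X, hX, rfl⟩
    refine (lamMin_compression_le hk hQ (hpsd X hX) hS ?_).trans (by gcongr; exact hτ X hX)
    exact conjLinearMap_compression_of_ker_le (hpsd X₀ hmem).isHermitian (hpsd X hX).isHermitian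
      hQ hrange.ge (hker X hX)
  constructor
  · exact (lamMin_pos hk (posDef_compression_of_range_le (hpsd X₀ hmem) hQ hrange.le)).trans_le
      (le_csSup ⟨_, hle⟩ (mem_image_of_mem _ hmem))
  · exact (le_div_iff₀ hpos).1 (csSup_le ⟨_, mem_image_of_mem _ hmem⟩ hle)

theorem dotProduct_mulVec_le_trace_compression_mul {ι κ : Type*} [Fintype ι] [Fintype κ]
    [DecidableEq κ] {Q : Matrix ι κ ℝ} {S : Matrix ι ι ℝ} (hS : S.PosSemidef) (hQ : Qᵀ * Q = 1)
    {u : ι → ℝ} (hu : u ∈ LinearMap.range Q.mulVecLin) :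
    u ⬝ᵥ S *ᵥ u ≤ (Qᵀ * S * Q).trace * (u ⬝ᵥ u) := by
  obtain ⟨z, rfl⟩ := hu
  have hnorm : (Q *ᵥ z) ⬝ᵥ (Q *ᵥ z) = z ⬝ᵥ z := by
    rw [dotProduct_mulVec, ← mulVec_transpose, mulVec_mulVec, hQ, one_mulVec]
  rw [mulVecLin_apply, hnorm, ← dotProduct_transpose_mul_mul_mulVec]
  exact dotProduct_mulVec_le_trace_mul (hS.conjTranspose_mul_mul_same Q) z

theorem eigenvalue_bounds_of_mul_trace_compression_le {n : ℕ}
    {X S QX QS : Matrix (Fin n) (Fin n) ℝ} {φ ψ : Fin n → ℝ} {μ σ s : ℝ} {i : Fin n}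
    {Q : Matrix (Fin n) (Fin k) ℝ} (hμ : 0 < μ) (hX : X.PosDef) (hS : S.PosSemidef)
    (hSX : S * X = μ • 1) (hQX : QXᵀ * QX = 1) (hXQ : X * QX = QX * diagonal φ)
    (hφ : Antitone φ) (hQS : QSᵀ * QS = 1) (hSQ : S * QS = QS * diagonal ψ) (hψ : Antitone ψ)
    (hQ : Qᵀ * Q = 1) (hσ : 0 < σ) (hσs : σ ≤ s) (hs : s * (Qᵀ * S * Q).trace ≤ n * μ)
    (hi : i < Module.finrank ℝ (LinearMap.range Q.mulVecLin)) :
    ψ i.rev ≤ n * μ / σ ∧ σ / n ≤ φ i := by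
  have hn : (0 : ℝ) < n := mod_cast i.pos
  have htrace : (Qᵀ * S * Q).trace ≤ n * μ / σ := by
    rw [le_div_iff₀' hσ]
    exact (mul_le_mul_of_nonneg_right hσs
      (hS.conjTranspose_mul_mul_same Q).trace_nonneg).trans hs
  have hquad : ∀ u ∈ LinearMap.range Q.mulVecLin, u ⬝ᵥ S *ᵥ u ≤ n * μ / σ * (u ⬝ᵥ u) :=
    fun u hu => (dotProduct_mulVec_le_trace_compression_mul hS hQ hu).trans
      (mul_le_mul_of_nonneg_right htrace (dotProduct_star_self_nonneg u))
  obtain ⟨hψi, hφi⟩ := eigenvalue_rev_le_and_div_le_eigenvalue hμ (by positivity) hX hSX hQX hXQ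
    hφ hQS hSQ hψ hquad hi
  refine ⟨hψi, ?_⟩
  rwa [div_div_eq_mul_div, mul_comm μ, mul_div_mul_right _ _ hμ.ne'] at hφi

end RangeCompression

section RelativeInterior

variable {V : Type*} [AddCommGroup V] [Module ℝ V] [TopologicalSpace V] {s : Set V} {x y : V}

theorem exists_pos_add_smul_sub_mem_of_mem_intrinsicInterior [IsTopologicalAddGroup V]
    [ContinuousSMul ℝ V] (hx : x ∈ intrinsicInterior ℝ s) (hy : y ∈ s) :
    ∃ η : ℝ, 0 < η ∧ x + η • (x - y) ∈ s := by
  obtain ⟨z, hz, rfl⟩ := mem_intrinsicInterior.1 hx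
  have hmem (η : ℝ) : (z : V) + η • ((z : V) - y) ∈ affineSpan ℝ s := by
    have hline := AffineMap.lineMap_mem (-η) z.2 (subset_affineSpan ℝ s hy)
    rw [AffineMap.lineMap_apply] at hline
    convert hline using 1
    simp only [vsub_eq_sub, vadd_eq_add]
    module
  let ray : ℝ → affineSpan ℝ s := fun η => ⟨(z : V) + η • ((z : V) - y), hmem η⟩
  have hray : Continuous ray := by
    refine Continuous.subtype_mk ?_ _
    fun_prop
  have hray0 : ray 0 = z := by ext; simp [ray]
  have hnhds : (Subtype.val ⁻¹' s : Set (affineSpan ℝ s)) ∈ nhds (ray 0) := by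
    rw [hray0]
    exact mem_interior_iff_mem_nhds.1 hz
  obtain ⟨η, hη, hpos⟩ := ((hray.continuousAt.eventually hnhds).filter_mono
    nhdsWithin_le_nhds |>.and (self_mem_nhdsWithin (s := Ioi (0 : ℝ)))).exists
  exact ⟨η, hpos, hη⟩

theorem mulVec_eq_zero_of_mem_intrinsicInterior [IsTopologicalAddGroup V] [ContinuousSMul ℝ V]
    {ι : Type*} [Fintype ι] (π : V →ₗ[ℝ] Matrix ι ι ℝ) (hs : ∀ z ∈ s, (π z).PosSemidef)
    (hx : x ∈ intrinsicInterior ℝ s) (hy : y ∈ s) {v : ι → ℝ} (hv : π x *ᵥ v = 0) :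
    π y *ᵥ v = 0 := by
  obtain ⟨η, hη, hmem⟩ := exists_pos_add_smul_sub_mem_of_mem_intrinsicInterior hx hy
  have hbeyond := (hs _ hmem).dotProduct_mulVec_nonneg v
  rw [map_add, map_smul, map_sub, add_mulVec, smul_mulVec, sub_mulVec, hv, zero_add, zero_sub,
    smul_neg, dotProduct_neg, dotProduct_smul, smul_eq_mul, neg_nonneg] at hbeyond
  exact ((hs y hy).dotProduct_mulVec_zero_iff v).1 <|
    (nonpos_of_mul_nonpos_right hbeyond hη).antisymm ((hs y hy).dotProduct_mulVec_nonneg v)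

end RelativeInterior

section SemidefiniteOptimization

variable {n m : ℕ} {C Cbar X S Xs Ss : Matrix (Fin n) (Fin n) ℝ}
  {A : Fin m → Matrix (Fin n) (Fin n) ℝ} {b y ys : Fin m → ℝ} {ε μ : ℝ}

theorem trace_objective_mul_eq_add (hX : PrimalFeasible A b X)
    (hS : DualFeasible C Cbar A ε y S) :
    ((C + ε • Cbar) * X).trace = ∑ i, b i * y i + (S * X).trace := by
  rw [← hS.2.1, Matrix.add_mul, trace_add, Matrix.sum_mul, trace_sum]
  refine congrArg (· + _) (Finset.sum_congr rfl fun i _ => ?_)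
  rw [smul_mul, trace_smul, hX.2.1, smul_eq_mul, mul_comm]

theorem mulVec_eq_zero_of_mem_primalOpt (hXs : Xs ∈ intrinsicInterior ℝ (PrimalOpt C Cbar A b ε))
    (hX : X ∈ PrimalOpt C Cbar A b ε) {v : Fin n → ℝ} (hv : Xs *ᵥ v = 0) : X *ᵥ v = 0 :=
  mulVec_eq_zero_of_mem_intrinsicInterior .id (fun _ hz => hz.1.2.2) hXs hX hv

theorem mulVec_eq_zero_of_mem_dualOpt
    (hSs : (ys, Ss) ∈ intrinsicInterior ℝ (DualOpt C Cbar A b ε))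
    (hS : (y, S) ∈ DualOpt C Cbar A b ε) {v : Fin n → ℝ} (hv : Ss *ᵥ v = 0) : S *ᵥ v = 0 :=
  mulVec_eq_zero_of_mem_intrinsicInterior (LinearMap.snd ℝ _ _) (fun _ hz => hz.1.2.2) hSs hS hv

theorem ne_zero_of_finrank_range_lt (hXs : Xs ∈ intrinsicInterior ℝ (PrimalOpt C Cbar A b ε))
    (hrank : Module.finrank ℝ (LinearMap.range Xs.mulVecLin) < n)
    (hSs : (ys, Ss) ∈ DualOpt C Cbar A b ε) (hX : PrimalFeasible A b X) (hXpos : X.PosDef) :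
    Ss ≠ 0 := by
  rintro rfl
  have hopt : X ∈ PrimalOpt C Cbar A b ε := ⟨hX, fun X' hX' => by
    rw [trace_objective_mul_eq_add hX hSs.1, trace_objective_mul_eq_add hX' hSs.1,
      Matrix.zero_mul, Matrix.zero_mul]⟩
  have hker : LinearMap.ker Xs.mulVecLin = ⊥ := LinearMap.ker_eq_bot'.2 fun v hv =>
    mulVec_injective_of_isUnit hXpos.isUnit <| by
      rw [mulVec_eq_zero_of_mem_primalOpt hXs hopt hv, mulVec_zero]
  have hnullity := LinearMap.finrank_range_add_finrank_ker Xs.mulVecLin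
  rw [hker, finrank_bot, add_zero, Module.finrank_fin_fun] at hnullity
  exact hrank.ne hnullity

namespace CentralSol

theorem mul_eq_smul_one (h : CentralSol C Cbar A b ε μ X y S) : S * X = μ • 1 := by
  have hT := congrArg transpose h.2.2
  have hXT : Xᵀ = X := h.1.1
  have hST : Sᵀ = S := h.2.1.1
  rwa [transpose_mul, hXT, hST, transpose_smul, transpose_one] at hT

theorem trace_mul_eq (h : CentralSol C Cbar A b ε μ X y S) : (S * X).trace = n * μ := by
  rw [h.mul_eq_smul_one, trace_smul, trace_one, Fintype.card_fin, smul_eq_mul, mul_comm]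

theorem posDef_primal (hμ : 0 < μ) (h : CentralSol C Cbar A b ε μ X y S) : X.PosDef :=
  h.1.2.2.posDef_iff_isUnit.2 <| IsUnit.of_mul_eq_one_right (μ⁻¹ • S) <| by
    rw [smul_mul, h.mul_eq_smul_one, smul_smul, inv_mul_cancel₀ hμ.ne', one_smul]

theorem posDef_dual (hμ : 0 < μ) (h : CentralSol C Cbar A b ε μ X y S) : S.PosDef :=
  h.2.1.2.2.posDef_iff_isUnit.2 <| IsUnit.of_mul_eq_one_right (μ⁻¹ • X) <| by
    rw [smul_mul, h.2.2, smul_smul, inv_mul_cancel₀ hμ.ne', one_smul]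

theorem trace_mul_le_of_mem_primalOpt (h : CentralSol C Cbar A b ε μ X y S)
    {X' : Matrix (Fin n) (Fin n) ℝ} (hX' : X' ∈ PrimalOpt C Cbar A b ε) :
    (S * X').trace ≤ n * μ := by
  have hle := hX'.2 X h.1
  rwa [trace_objective_mul_eq_add hX'.1 h.2.1, trace_objective_mul_eq_add h.1 h.2.1,
    h.trace_mul_eq, add_le_add_iff_left] at hle

theorem trace_mul_le_of_mem_dualOpt (h : CentralSol C Cbar A b ε μ X y S)
    {p : (Fin m → ℝ) × Matrix (Fin n) (Fin n) ℝ} (hp : p ∈ DualOpt C Cbar A b ε) :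
    (X * p.2).trace ≤ n * μ := by
  have hgap := trace_objective_mul_eq_add h.1 hp.1
  rw [trace_objective_mul_eq_add h.1 h.2.1, h.trace_mul_eq] at hgap
  rw [trace_mul_comm]
  linarith [hp.2 y S h.2.1]

theorem sSup_lamMin_primalOpt (hμ : 0 < μ) (h : CentralSol C Cbar A b ε μ X y S)
    (hXs : Xs ∈ intrinsicInterior ℝ (PrimalOpt C Cbar A b ε)) {k : ℕ} (hk : 0 < k)
    {Q : Matrix (Fin n) (Fin k) ℝ} (hQ : Qᵀ * Q = 1)
    (hrange : LinearMap.range Q.mulVecLin = LinearMap.range Xs.mulVecLin) :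
    0 < sSup ((fun X => lamMin (Qᵀ * X * Q)) '' PrimalOpt C Cbar A b ε) ∧
      sSup ((fun X => lamMin (Qᵀ * X * Q)) '' PrimalOpt C Cbar A b ε) * (Qᵀ * S * Q).trace
        ≤ n * μ :=
  sSup_lamMin_compression_pos_and_mul_trace_le hk hQ (intrinsicInterior_subset hXs)
    (fun _ hX => hX.1.2.2) (fun _ hX _ hv => mulVec_eq_zero_of_mem_primalOpt hXs hX hv) hrange
    (h.posDef_dual hμ) fun _ hX => h.trace_mul_le_of_mem_primalOpt hX

theorem sSup_lamMin_dualOpt (hμ : 0 < μ) (h : CentralSol C Cbar A b ε μ X y S)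
    (hSs : (ys, Ss) ∈ intrinsicInterior ℝ (DualOpt C Cbar A b ε)) {k : ℕ} (hk : 0 < k)
    {Q : Matrix (Fin n) (Fin k) ℝ} (hQ : Qᵀ * Q = 1)
    (hrange : LinearMap.range Q.mulVecLin = LinearMap.range Ss.mulVecLin) :
    0 < sSup ((fun p => lamMin (Qᵀ * p.2 * Q)) '' DualOpt C Cbar A b ε) ∧
      sSup ((fun p => lamMin (Qᵀ * p.2 * Q)) '' DualOpt C Cbar A b ε) * (Qᵀ * X * Q).trace
        ≤ n * μ := by
  rw [← image_image (fun S => lamMin (Qᵀ * S * Q)) Prod.snd]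
  exact sSup_lamMin_compression_pos_and_mul_trace_le hk hQ ⟨_, intrinsicInterior_subset hSs, rfl⟩
    (forall_mem_image.2 fun _ hp => hp.1.2.2)
    (forall_mem_image.2 fun _ hp _ hv => mulVec_eq_zero_of_mem_dualOpt hSs hp hv) hrange
    (h.posDef_primal hμ) (forall_mem_image.2 fun _ hp => h.trace_mul_le_of_mem_dualOpt hp)

end CentralSol

end SemidefiniteOptimization

section CentralPathRate

open Asymptotics Filter

variable {n m : ℕ} {C Cbar X X₀ S Ss : Matrix (Fin n) (Fin n) ℝ}
  {A : Fin m → Matrix (Fin n) (Fin n) ℝ} {b y ys : Fin m → ℝ} {ε μ μhat : ℝ}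

/-- The directions along which a dual slack matrix can move without changing the dual objective:
the symmetric combinations `∑ i, y i • A i` with `∑ i, b i * y i = 0`. -/
def dualDirections (A : Fin m → Matrix (Fin n) (Fin n) ℝ) (b : Fin m → ℝ) :
    Submodule ℝ (Matrix (Fin n) (Fin n) ℝ) :=
  (LinearMap.ker (Fintype.linearCombination ℝ b)).map (Fintype.linearCombination ℝ A) ⊓
    selfAdjoint.submodule ℝ (Matrix (Fin n) (Fin n) ℝ)

/-- The pairs `(μ, S)` of a parameter `μ ∈ (0, μhat]` and the dual slack matrix `S` of a central
solution with that parameter. -/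
def centralSlacks (C Cbar : Matrix (Fin n) (Fin n) ℝ) (A : Fin m → Matrix (Fin n) (Fin n) ℝ)
    (b : Fin m → ℝ) (ε μhat : ℝ) : Set (ℝ × Matrix (Fin n) (Fin n) ℝ) :=
  {p | 0 < p.1 ∧ p.1 ≤ μhat ∧ ∃ X y, CentralSol C Cbar A b ε p.1 X y p.2}

theorem mem_dualDirections {M : Matrix (Fin n) (Fin n) ℝ} :
    M ∈ dualDirections A b ↔
      (∃ y : Fin m → ℝ, ∑ i, b i * y i = 0 ∧ ∑ i, y i • A i = M) ∧ M.IsHermitian := by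
  simp only [dualDirections, Submodule.mem_inf, Submodule.mem_map, LinearMap.mem_ker,
    Fintype.linearCombination_apply, smul_eq_mul, mul_comm (b _)]
  exact Iff.rfl

theorem exists_eq_mul_of_mem_dualAnnihilator {f : Matrix (Fin n) (Fin n) ℝ →ₗ[ℝ] ℝ}
    (hf : f ∈ (dualDirections A b).dualAnnihilator) :
    ∃ κ : ℝ, ∀ y : Fin m → ℝ, (∑ i, y i • A i).IsHermitian →
      f (∑ i, y i • A i) = κ * ∑ i, b i * y i := by
  by_cases hb : ∃ z : Fin m → ℝ, (∑ i, z i • A i).IsHermitian ∧ ∑ i, b i * z i ≠ 0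
  · obtain ⟨z, hz, hbz⟩ := hb
    refine ⟨f (∑ i, z i • A i) / ∑ i, b i * z i, fun y hy => ?_⟩
    set t := (∑ i, b i * y i) / ∑ i, b i * z i with ht
    have hcomb : ∑ i, (y - t • z) i • A i = ∑ i, y i • A i - t • ∑ i, z i • A i := by
      simp only [Pi.sub_apply, Pi.smul_apply, sub_smul, smul_assoc, Finset.sum_sub_distrib,
        Finset.smul_sum]
    have hmem : ∑ i, (y - t • z) i • A i ∈ dualDirections A b := by
      refine mem_dualDirections.2 ⟨⟨_, ?_, rfl⟩, ?_⟩
      · change b ⬝ᵥ (y - t • z) = 0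
        rw [dotProduct_sub, dotProduct_smul]
        exact sub_eq_zero.2 (div_mul_cancel₀ _ hbz).symm
      · rw [hcomb]
        exact hy.sub (hz.smul (IsSelfAdjoint.all t))
    have hfz := (Submodule.mem_dualAnnihilator f).1 hf _ hmem
    rw [hcomb, map_sub, map_smul, sub_eq_zero] at hfz
    rw [hfz, ht, smul_eq_mul]
    ring
  · push Not at hb
    exact ⟨0, fun y hy => by
      rw [zero_mul]
      exact (Submodule.mem_dualAnnihilator f).1 hf _
        (mem_dualDirections.2 ⟨⟨y, hb y hy, rfl⟩, hy⟩)⟩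

theorem mem_dualOpt_of_smul_add (hS : (ys, Ss) ∈ DualOpt C Cbar A b ε) {a : ℝ}
    (hy : ∑ i, b i * y i = 0) (hpsd : (Ss + a • ∑ i, y i • A i).PosSemidef) :
    (ys - a • y, Ss + a • ∑ i, y i • A i) ∈ DualOpt C Cbar A b ε := by
  refine ⟨⟨hpsd.isHermitian, ?_, hpsd⟩, fun y' S' h' => ?_⟩
  · rw [← hS.1.2.1]
    simp only [Pi.sub_apply, Pi.smul_apply, sub_smul, smul_assoc, Finset.sum_sub_distrib,
      Finset.smul_sum]
    abel
  · have hobj : b ⬝ᵥ (ys - a • y) = b ⬝ᵥ ys := by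
      rw [dotProduct_sub, dotProduct_smul, show b ⬝ᵥ y = 0 from hy, smul_zero, sub_zero]
    exact (hS.2 y' S' h').trans_eq hobj.symm

theorem mulVec_eq_zero_of_smul_add_posSemidef
    (hSs : (ys, Ss) ∈ intrinsicInterior ℝ (DualOpt C Cbar A b ε)) {t : ℝ}
    (hy : ∑ i, b i * y i = 0) (hpsd : (t • Ss + ∑ i, y i • A i).PosSemidef) {v : Fin n → ℝ}
    (hv : Ss *ᵥ v = 0) : (t • Ss + ∑ i, y i • A i) *ᵥ v = 0 := by
  have hopt := intrinsicInterior_subset hSs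
  have hr : 0 < 1 + |t| + t := by linarith [neg_abs_le t]
  have hcomb : (1 + |t| + t)⁻¹ • ((1 + |t|) • Ss + (t • Ss + ∑ i, y i • A i)) =
      Ss + (1 + |t| + t)⁻¹ • ∑ i, y i • A i := by
    rw [← add_assoc, ← add_smul, smul_add, smul_smul, inv_mul_cancel₀ hr.ne', one_smul]
  have hshift : (Ss + (1 + |t| + t)⁻¹ • ∑ i, y i • A i).PosSemidef := by
    rw [← hcomb]
    exact ((hopt.1.2.2.smul (by positivity)).add hpsd).smul (by positivity)
  have hker := mulVec_eq_zero_of_mem_dualOpt hSs (mem_dualOpt_of_smul_add hopt hy hshift) hv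
  rw [add_mulVec, hv, zero_add, smul_mulVec, smul_eq_zero_iff_right (inv_ne_zero hr.ne')] at hker
  rw [add_mulVec, smul_mulVec, hv, hker, smul_zero, add_zero]

theorem mem_span_sup_dualDirections {M : Matrix (Fin n) (Fin n) ℝ} :
    M ∈ Submodule.span ℝ {Ss} ⊔ dualDirections A b ↔ ∃ (t : ℝ) (y : Fin m → ℝ),
      ∑ i, b i * y i = 0 ∧ (∑ i, y i • A i).IsHermitian ∧ t • Ss + ∑ i, y i • A i = M := by
  simp only [Submodule.mem_sup, Submodule.mem_span_singleton, mem_dualDirections]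
  constructor
  · rintro ⟨_, ⟨t, rfl⟩, _, ⟨⟨y, hy, rfl⟩, hsymm⟩, rfl⟩
    exact ⟨t, y, hy, hsymm, rfl⟩
  · rintro ⟨t, y, hy, hsymm, rfl⟩
    exact ⟨_, ⟨t, rfl⟩, _, ⟨⟨y, hy, rfl⟩, hsymm⟩, rfl⟩

theorem isMaximalPosSemidef_span_sup_dualDirections
    (hSs : (ys, Ss) ∈ intrinsicInterior ℝ (DualOpt C Cbar A b ε)) (hne : Ss ≠ 0) :
    IsMaximalPosSemidef (Submodule.span ℝ {Ss} ⊔ dualDirections A b) Ss where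
  mem := Submodule.mem_sup_left (Submodule.mem_span_singleton_self Ss)
  posSemidef := (intrinsicInterior_subset hSs).1.2.2
  ne_zero := hne
  mulVec_eq_zero M hML hM v hv := by
    obtain ⟨t, y, hy, -, rfl⟩ := mem_span_sup_dualDirections.1 hML
    exact mulVec_eq_zero_of_smul_add_posSemidef hSs hy hM hv

namespace CentralSol

theorem slack_sub_eq_sum (h : CentralSol C Cbar A b ε μ X y S)
    (hSs : DualFeasible C Cbar A ε ys Ss) : S - Ss = ∑ i, (ys - y) i • A i := by
  simp only [Pi.sub_apply, sub_smul, Finset.sum_sub_distrib]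
  rw [sub_eq_sub_iff_add_eq_add, add_comm S, h.2.1.2.1, hSs.2.1]

theorem dual_gap_nonneg (h : CentralSol C Cbar A b ε μ X y S)
    (hSs : (ys, Ss) ∈ DualOpt C Cbar A b ε) : 0 ≤ ∑ i, b i * (ys - y) i := by
  change 0 ≤ b ⬝ᵥ (ys - y)
  rw [dotProduct_sub, sub_nonneg]
  exact hSs.2 y S h.2.1

theorem dual_gap_le (h : CentralSol C Cbar A b ε μ X y S)
    (hSs : DualFeasible C Cbar A ε ys Ss) : ∑ i, b i * (ys - y) i ≤ n * μ := by
  have hweak := trace_mul_nonneg hSs.2.2 h.1.2.2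
  have hgap := trace_objective_mul_eq_add h.1 hSs
  rw [trace_objective_mul_eq_add h.1 h.2.1, h.trace_mul_eq] at hgap
  change b ⬝ᵥ (ys - y) ≤ n * μ
  rw [dotProduct_sub]
  simp only [dotProduct]
  linarith

theorem mul_trace_le (h : CentralSol C Cbar A b ε μ X y S)
    (hSs : DualFeasible C Cbar A ε ys Ss) (hX₀ : PrimalFeasible A b X₀) {δ : ℝ}
    (hδ : (X₀ - δ • 1).PosSemidef) : δ * S.trace ≤ (Ss * X₀).trace + n * μ := by
  have hpos := trace_mul_nonneg h.2.1.2.2 hδ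
  rw [Matrix.mul_sub, Matrix.mul_smul, Matrix.mul_one, trace_sub, trace_smul, smul_eq_mul] at hpos
  have hobj := trace_objective_mul_eq_add hX₀ hSs
  rw [trace_objective_mul_eq_add hX₀ h.2.1] at hobj
  have hgap : b ⬝ᵥ (ys - y) ≤ n * μ := h.dual_gap_le hSs
  rw [dotProduct_sub] at hgap
  simp only [dotProduct] at hgap
  linarith

end CentralSol

theorem isApproxMem_centralSlacks (hSs : (ys, Ss) ∈ DualOpt C Cbar A b ε)
    (hX₀ : PrimalFeasible A b X₀) (hX₀pos : X₀.PosDef) :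
    IsApproxMem (𝓟 (centralSlacks C Cbar A b ε μhat)) (Submodule.span ℝ {Ss} ⊔ dualDirections A b)
      Prod.snd (fun p => n * p.1) where
  posSemidef := eventually_principal.2 fun _ ⟨_, _, _, _, h⟩ => h.2.1.2.2
  trace_isBigO := by
    obtain ⟨δ, hδ, hpsd⟩ := exists_pos_sub_smul_one_posSemidef hX₀pos
    refine isBigO_principal.2 ⟨((Ss * X₀).trace + n * μhat) / δ, ?_⟩
    rintro ⟨μ, S⟩ ⟨-, hμhat, X, y, h⟩
    rw [Real.norm_of_nonneg h.2.1.2.2.trace_nonneg, Pi.one_apply, norm_one, mul_one,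
      le_div_iff₀' hδ]
    exact (h.mul_trace_le hSs.1 hX₀ hpsd).trans (by gcongr)
  rate_nonneg := eventually_principal.2 fun _ ⟨hμ, _⟩ => mul_nonneg n.cast_nonneg hμ.le
  rate_isBigO := by
    refine isBigO_principal.2 ⟨n * μhat, ?_⟩
    rintro ⟨μ, S⟩ ⟨hμ, hμhat, -⟩
    rw [Real.norm_of_nonneg (by positivity), Pi.one_apply, norm_one, mul_one]
    gcongr
  residual_isBigO f hf := by
    rw [Submodule.dualAnnihilator_sup_eq, Submodule.mem_inf] at hf
    obtain ⟨κ, hκ⟩ := exists_eq_mul_of_mem_dualAnnihilator hf.2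
    refine isBigO_principal.2 ⟨|κ|, ?_⟩
    rintro ⟨μ, S⟩ ⟨hμ, -, X, y, h⟩
    have hfSs : f Ss = 0 :=
      (Submodule.mem_dualAnnihilator f).1 hf.1 Ss (Submodule.mem_span_singleton_self Ss)
    have hdiff := h.slack_sub_eq_sum hSs.1
    have hfS : f S = κ * ∑ i, b i * (ys - y) i := by
      rw [← hκ _ (hdiff ▸ h.2.1.2.2.isHermitian.sub hSs.1.2.2.isHermitian), ← hdiff, map_sub,
        hfSs, sub_zero]
    rw [hfS, norm_mul, Real.norm_of_nonneg (h.dual_gap_nonneg hSs),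
      Real.norm_of_nonneg (mul_nonneg n.cast_nonneg hμ.le)]
    exact mul_le_mul_of_nonneg_left (h.dual_gap_le hSs.1) (abs_nonneg κ)

theorem exists_mul_eq_zero_and_dotProduct_mulVec_le_trace_mul {ι : Type*} [Fintype ι]
    {Z : Matrix ι ι ℝ} (hZ : Z.IsHermitian) :
    ∃ W : Matrix ι ι ℝ, Z * W = 0 ∧ ∀ S : Matrix ι ι ℝ, S.PosSemidef → ∀ v, Z *ᵥ v = 0 →
      v ⬝ᵥ S *ᵥ v ≤ (W * S).trace * (v ⬝ᵥ v) := by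
  classical
  obtain ⟨s, U, H, hU, hZU, hUH⟩ := exists_isometry_onto_ker hZ
  refine ⟨U * Uᵀ, by rw [← Matrix.mul_assoc, hZU, Matrix.zero_mul], fun S hS v hv => ?_⟩
  have hrange : v ∈ LinearMap.range U.mulVecLin := ⟨Uᵀ *ᵥ v, by
    rw [mulVecLin_apply, mulVec_mulVec, eq_sub_of_add_eq hUH, sub_mulVec, one_mulVec,
      ← mulVec_mulVec, hv, mulVec_zero, sub_zero]⟩
  rw [Matrix.mul_assoc, trace_mul_comm]
  exact dotProduct_mulVec_le_trace_compression_mul hS hU hrange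

theorem one_half_pow_sub_one (hn : 0 < n) : (1 / 2 : ℝ) ^ (n - 1) = 2 ^ (1 - n : ℝ) := by
  rw [← neg_sub, Real.rpow_neg two_pos.le, ← Nat.cast_pred hn, Real.rpow_natCast, one_div,
    inv_pow]

theorem exists_dotProduct_mulVec_le_rpow
    (hSs : (ys, Ss) ∈ intrinsicInterior ℝ (DualOpt C Cbar A b ε)) (hne : Ss ≠ 0)
    (hX₀ : PrimalFeasible A b X₀) (hX₀pos : X₀.PosDef) (μhat : ℝ) :
    ∃ K : ℝ, 0 < K ∧ ∀ μ X y S, 0 < μ → μ ≤ μhat → CentralSol C Cbar A b ε μ X y S →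
      ∀ v, Ss *ᵥ v = 0 → v ⬝ᵥ S *ᵥ v ≤ K * (n * μ) ^ (2 : ℝ) ^ (1 - n : ℝ) * (v ⬝ᵥ v) := by
  have hn : 0 < n := Nat.pos_of_ne_zero fun h0 => hne <| by
    subst h0
    exact Subsingleton.elim _ _
  have hSsH : Ss.IsHermitian := (intrinsicInterior_subset hSs).1.2.2.isHermitian
  have hL : ∀ M ∈ Submodule.span ℝ {Ss} ⊔ dualDirections A b, M.IsHermitian := fun M hM => by
    obtain ⟨t, y, -, hsymm, rfl⟩ := mem_span_sup_dualDirections.1 hM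
    exact (hSsH.smul (IsSelfAdjoint.all t)).add hsymm
  obtain ⟨W, hW, hquad⟩ := exists_mul_eq_zero_and_dotProduct_mulVec_le_trace_mul hSsH
  obtain ⟨K, hK, hrate⟩ := (isBigO_trace_mul_of_isApproxMem (n - 1) hL
    (isMaximalPosSemidef_span_sup_dualDirections hSs hne) hW
    (isApproxMem_centralSlacks (μhat := μhat) (intrinsicInterior_subset hSs) hX₀ hX₀pos)
    (by rw [Fintype.card_fin]; omega)).exists_pos
  rw [isBigOWith_principal, one_half_pow_sub_one hn] at hrate
  refine ⟨K, hK, fun μ X y S hμ hμhat h v hv => (hquad S h.2.1.2.2 v hv).trans ?_⟩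
  have hbound := hrate (μ, S) ⟨hμ, hμhat, X, y, h⟩
  rw [Real.norm_of_nonneg (r := (n * μ) ^ _) (by positivity)] at hbound
  exact mul_le_mul_of_nonneg_right ((le_abs_self _).trans hbound) (dotProduct_star_self_nonneg v)

theorem exists_dotProduct_mulVec_le_mul_sqrt_mul_rpow {Xs : Matrix (Fin n) (Fin n) ℝ}
    (hXs : Xs ∈ intrinsicInterior ℝ (PrimalOpt C Cbar A b ε))
    (hSs : (ys, Ss) ∈ intrinsicInterior ℝ (DualOpt C Cbar A b ε)) (μhat : ℝ) :
    ∃ c : ℝ, 0 < c ∧ (Module.finrank ℝ (LinearMap.range Xs.mulVecLin) < n →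
      ∀ μ X y S, 0 < μ → μ ≤ μhat → CentralSol C Cbar A b ε μ X y S →
        ∀ v ∈ LinearMap.ker Ss.mulVecLin,
          v ⬝ᵥ S *ᵥ v ≤ c * √n * (n * μ) ^ (2 : ℝ) ^ (1 - n : ℝ) * (v ⬝ᵥ v)) := by
  by_cases hnonvacuous : Module.finrank ℝ (LinearMap.range Xs.mulVecLin) < n ∧
      ∃ μ X y S, 0 < μ ∧ CentralSol C Cbar A b ε μ X y S
  · obtain ⟨hrank, μ₀, X₀, y₀, S₀, hμ₀, h₀⟩ := hnonvacuous
    have hne := ne_zero_of_finrank_range_lt hXs hrank (intrinsicInterior_subset hSs) h₀.1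
      (h₀.posDef_primal hμ₀)
    obtain ⟨c, hc, hrate⟩ := exists_dotProduct_mulVec_le_rpow hSs hne h₀.1
      (h₀.posDef_primal hμ₀) μhat
    refine ⟨c, hc, fun _ μ X y S hμ hμhat h v hv => (hrate μ X y S hμ hμhat h v hv).trans ?_⟩
    have hsqrt : 1 ≤ √(n : ℝ) := Real.one_le_sqrt.2 (mod_cast (Nat.zero_le _).trans_lt hrank)
    have hnorm : 0 ≤ v ⬝ᵥ v := dotProduct_star_self_nonneg v
    gcongr
    exact le_mul_of_one_le_right hc.le hsqrt
  · exact ⟨1, one_pos, fun hrank μ X y S hμ _ h =>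
      absurd ⟨hrank, μ, X, y, S, hμ, h⟩ hnonvacuous⟩

end CentralPathRate

theorem pos_and_le_of_eq_ite_min {p q : Prop} [Decidable p] [Decidable q] {σB σN σ : ℝ}
    (hB : ¬p → 0 < σB) (hN : ¬q → 0 < σN)
    (hσ : σ = if p then σN else if q then σB else min σB σN) :
    (¬p → 0 < σ ∧ σ ≤ σB) ∧ (¬q → 0 < σ ∧ σ ≤ σN) := by
  subst hσ
  split_ifs with hp hq <;> simp_all

theorem stmt15_general {n m : ℕ} (C Cbar : Matrix (Fin n) (Fin n) ℝ)
    (A : Fin m → Matrix (Fin n) (Fin n) ℝ) (b : Fin m → ℝ) (ε μhat : ℝ)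
    (Xs Ss : Matrix (Fin n) (Fin n) ℝ) (ys : Fin m → ℝ)
    (hmc : MaxComp C Cbar A b ε Xs ys Ss)
    (nB nT nN : ℕ)
    (hnB : nB = Module.finrank ℝ (LinearMap.range Xs.mulVecLin))
    (hnN : nN = Module.finrank ℝ (LinearMap.range Ss.mulVecLin))
    (hnT : nB + nT + nN = n)
    (QB : Matrix (Fin n) (Fin nB) ℝ) (QN : Matrix (Fin n) (Fin nN) ℝ)
    (hQBorth : QBᵀ * QB = 1)
    (hQBrange : LinearMap.range QB.mulVecLin = LinearMap.range Xs.mulVecLin)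
    (hQNorth : QNᵀ * QN = 1)
    (hQNrange : LinearMap.range QN.mulVecLin = LinearMap.range Ss.mulVecLin)
    (σB σN σ : ℝ)
    (hσB : σB = sSup ((fun X => lamMin (QBᵀ * X * QB)) '' PrimalOpt C Cbar A b ε))
    (hσN : σN = sSup ((fun p => lamMin (QNᵀ * p.2 * QN)) '' DualOpt C Cbar A b ε))
    (hσ : σ = if nB = 0 then σN else if nN = 0 then σB else min σB σN) :
    ∃ c : ℝ, 0 < c ∧ ∀ μ : ℝ, 0 < μ → μ ≤ μhat →
      ∀ (Xμ Sμ : Matrix (Fin n) (Fin n) ℝ) (yμ : Fin m → ℝ),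
        CentralSol C Cbar A b ε μ Xμ yμ Sμ →
        ∀ (φ ψ : Fin n → ℝ) (QX QS : Matrix (Fin n) (Fin n) ℝ),
          Antitone φ → Antitone ψ →
          QXᵀ * QX = 1 → Xμ * QX = QX * Matrix.diagonal φ →
          QSᵀ * QS = 1 → Sμ * QS = QS * Matrix.diagonal ψ →
          (∀ i : Fin n, (i : ℕ) < nB → ψ i.rev ≤ n * μ / σ ∧ σ / n ≤ φ i) ∧
          (∀ i : Fin n, (i : ℕ) < nN → φ i.rev ≤ n * μ / σ ∧ σ / n ≤ ψ i) ∧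
          (∀ i : Fin n, nB ≤ (i : ℕ) → (i : ℕ) < nB + nT →
            μ / (c * √n * (n * μ) ^ (2 : ℝ) ^ (1 - n : ℝ)) ≤ φ i ∧
              ψ i.rev ≤ c * √n * (n * μ) ^ (2 : ℝ) ^ (1 - n : ℝ)) := by
  obtain ⟨hXs, hSs⟩ := hmc
  obtain ⟨c, hc, hrate⟩ := exists_dotProduct_mulVec_le_mul_sqrt_mul_rpow hXs hSs μhat
  have hcard := LinearMap.finrank_range_add_finrank_ker Ss.mulVecLin
  rw [← hnN, Module.finrank_fin_fun] at hcard
  refine ⟨c, hc, fun μ hμ hμhat X S y h φ ψ QX QS hφ hψ hQX hXQ hQS hSQ => ?_⟩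
  have hBpos (h0 : nB ≠ 0) :=
    h.sSup_lamMin_primalOpt hμ hXs (Nat.pos_of_ne_zero h0) hQBorth hQBrange
  have hNpos (h0 : nN ≠ 0) :=
    h.sSup_lamMin_dualOpt hμ hSs (Nat.pos_of_ne_zero h0) hQNorth hQNrange
  rw [← hσB] at hBpos
  rw [← hσN] at hNpos
  obtain ⟨hσB', hσN'⟩ := pos_and_le_of_eq_ite_min (fun h0 => (hBpos h0).1)
    (fun h0 => (hNpos h0).1) hσ
  have hX := h.posDef_primal hμ
  have hS := h.posDef_dual hμ
  refine ⟨fun i hi => ?_, fun i hi => ?_, fun i hi hi' => ?_⟩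
  · have h0 : nB ≠ 0 := by omega
    exact eigenvalue_bounds_of_mul_trace_compression_le hμ hX hS.posSemidef h.mul_eq_smul_one
      hQX hXQ hφ hQS hSQ hψ hQBorth (hσB' h0).1 (hσB' h0).2 (hBpos h0).2
      (by rwa [hQBrange, ← hnB])
  · have h0 : nN ≠ 0 := by omega
    exact eigenvalue_bounds_of_mul_trace_compression_le hμ hS hX.posSemidef h.2.2
      hQS hSQ hψ hQX hXQ hφ hQNorth (hσN' h0).1 (hσN' h0).2 (hNpos h0).2
      (by rwa [hQNrange, ← hnN])
  · have hn : (0 : ℝ) < n := mod_cast i.pos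
    exact (eigenvalue_rev_le_and_div_le_eigenvalue hμ (by positivity) hX h.mul_eq_smul_one
      hQX hXQ hφ hQS hSQ hψ (hrate (by omega) μ X y S hμ hμhat h)
      (by omega)).symm

/-- eigenvalue bounds along the central path identifying the optimal partition
(Theorem 3.8 of Mohammad-Nezhad and Terlaky). -/
theorem stmt15 {n m : ℕ} (C Cbar : Matrix (Fin n) (Fin n) ℝ)
    (A : Fin m → Matrix (Fin n) (Fin n) ℝ) (b : Fin m → ℝ)
    (hSA : StandingAssumptions C Cbar A b)
    (Xs Ss : Matrix (Fin n) (Fin n) ℝ) (ys : Fin m → ℝ)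
    (hmc : MaxComp C Cbar A b 0 Xs ys Ss)
    (nB nT nN : ℕ)
    (hnB : nB = Module.finrank ℝ (LinearMap.range Xs.mulVecLin))
    (hnN : nN = Module.finrank ℝ (LinearMap.range Ss.mulVecLin))
    (hnT : nB + nT + nN = n)
    (QB : Matrix (Fin n) (Fin nB) ℝ) (QN : Matrix (Fin n) (Fin nN) ℝ)
    (hQBorth : QBᵀ * QB = 1)
    (hQBrange : LinearMap.range QB.mulVecLin = LinearMap.range Xs.mulVecLin)
    (hQNorth : QNᵀ * QN = 1)
    (hQNrange : LinearMap.range QN.mulVecLin = LinearMap.range Ss.mulVecLin)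
    (σB σN σ : ℝ)
    (hσB : σB = sSup ((fun X => lamMin (QBᵀ * X * QB)) '' PrimalOpt C Cbar A b 0))
    (hσN : σN = sSup ((fun p => lamMin (QNᵀ * p.2 * QN)) '' DualOpt C Cbar A b 0))
    (hσ : σ = if nB = 0 then σN else if nN = 0 then σB else min σB σN) :
    ∃ (μhat c γ : ℝ), 0 < μhat ∧ 0 < c ∧ (2 : ℝ) ^ ((1 : ℝ) - (n : ℝ)) ≤ γ ∧
      ∀ μ : ℝ, 0 < μ → μ ≤ μhat →
        ∀ (Xμ Sμ : Matrix (Fin n) (Fin n) ℝ) (yμ : Fin m → ℝ),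
          CentralSol C Cbar A b 0 μ Xμ yμ Sμ →
          ∀ (φ ψ : Fin n → ℝ) (QX QS : Matrix (Fin n) (Fin n) ℝ),
            Antitone φ → Antitone ψ →
            QXᵀ * QX = 1 → Xμ * QX = QX * Matrix.diagonal φ →
            QSᵀ * QS = 1 → Sμ * QS = QS * Matrix.diagonal ψ →
            (∀ i : Fin n, (i : ℕ) < nB →
              ψ ⟨n - 1 - (i : ℕ), by have := i.2; omega⟩ ≤ (n : ℝ) * μ / σ ∧
                σ / (n : ℝ) ≤ φ i) ∧
            (∀ i : Fin n, (i : ℕ) < nN →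
              φ ⟨n - 1 - (i : ℕ), by have := i.2; omega⟩ ≤ (n : ℝ) * μ / σ ∧
                σ / (n : ℝ) ≤ ψ i) ∧
            (∀ i : Fin n, nB ≤ (i : ℕ) → (i : ℕ) < nB + nT →
              μ / (c * Real.sqrt (n : ℝ) * ((n : ℝ) * μ) ^ γ) ≤ φ i ∧
                ψ ⟨n - 1 - (i : ℕ), by have := i.2; omega⟩ ≤
                  c * Real.sqrt (n : ℝ) * ((n : ℝ) * μ) ^ γ) := by
  obtain ⟨c, hc, h⟩ := stmt15_general C Cbar A b 0 1 Xs Ss ys hmc nB nT nN hnB hnN hnT QB QN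
    hQBorth hQBrange hQNorth hQNrange σB σN σ hσB hσN hσ
  have hrev (i : Fin n) : i.rev = ⟨n - 1 - i, by omega⟩ := Fin.ext <|
    (Nat.sub_add_eq n i 1).trans (Nat.sub_right_comm n i 1)
  simp only [hrev] at h
  exact ⟨1, c, _, one_pos, hc, le_rfl, h⟩
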